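/- arXiv:0904.2782 — 3 statements merged into one kernel-verified Lean document; each statement's English description precedes it below -/
import Mathlib

section
/- (Law of the Iterated Logarithm, recurrence form.) For ν-almost every x : ℕ → Bool, for every ε > 0 the set {n ∈ ℕ : n ≥ 3 and Sₙ(x)/φ(n) ∈ [1 − ε, 1 + ε]} is infinite. -/
/-!
The idea is to look only at the very sparse times `n = 2 * k!`. Since at most countably many `ε`
matter and smaller `ε` is stronger, fix `0 < ε ≤ 1`.

* Upper bound. Hoeffding's inequality gives
  `ν (± S_n ≥ (1 + ε) φ n) ≤ exp (-(1 + ε)² log log n)`. As `log (2 * k!)` is at least `k / 2`, this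
  is summable along `n = 2 * k!`, so by Borel-Cantelli `|S_n| < (1 + ε) φ n` eventually along these
  times (`ae_eventually_upper`). No maximal inequality is needed, because only the recurrence of the
  ratio near `1` along a subsequence is claimed.
* Lower bound. The increments of `S` between consecutive times `2 * k!` and `2 * (k + 1)!` are
  independent. An elementary estimate of binomial coefficients near the centre
  (`centralBinom_mul_exp_le_choose`, `tail_lower`) shows that the increment is at least
  `(1 - ε / 2) φ (2 * (k + 1)!)` with probability at least `1 / (2 (k + 1))`; here one uses
  `log log (2 * k!) ~ log k`. The harmonic series diverges, so by the second Borel-Cantelli lemma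
  this happens for infinitely many `k` (`ae_frequently_lower`).
* Since `k! / (k + 1)!` tends to `0`, the upper bound for `-S` at time `2 * k!` shows that the past
  costs at most `(ε / 2) φ (2 * (k + 1)!)` (`phi_negligible`), and the two bounds combine.
-/

open MeasureTheory Filter

/-- Signed partial sum `Sₙ(x)`: (number of `i < n` with `x i = true`) minus
(number of `i < n` with `x i = false`). -/
def signedSum (x : ℕ → Bool) (n : ℕ) : ℤ :=
  ∑ i ∈ Finset.range n, (if x i then (1 : ℤ) else -1)

/-- The iterated-logarithm normalization `φ(n) = √(2 n log log n)` (natural logarithm). -/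
noncomputable def phi (n : ℕ) : ℝ :=
  Real.sqrt (2 * n * Real.log (Real.log n))

open ProbabilityTheory

/-! ### The coin-tossing measure -/

/-- The law of a single fair coin toss. -/
noncomputable def coin : Measure Bool := (PMF.uniformOfFintype Bool).toMeasure

instance : IsProbabilityMeasure coin := by unfold coin; infer_instance

lemma coin_singleton (b : Bool) : coin {b} = 1 / 2 := by
  rw [coin, PMF.toMeasure_apply_singleton _ _ (measurableSet_singleton b)]
  simp

/-- The cylinder probabilities determine `ν` as the product of fair coins. -/
lemma eq_infinitePi_coin (ν : Measure (ℕ → Bool))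
    (hν : ∀ (n : ℕ) (b : Fin n → Bool),
      ν {x : ℕ → Bool | ∀ i : Fin n, x i = b i} = (1 / 2 : ENNReal) ^ n) :
    ν = Measure.infinitePi (fun _ : ℕ => coin) := by
  classical
  have hmap : ∀ n : ℕ, ν.map (fun x (i : Fin n) => x i) = Measure.pi (fun _ : Fin n => coin) := by
    intro n
    refine Measure.ext_of_singleton fun b => ?_
    rw [Measure.map_apply (by fun_prop) (measurableSet_singleton b), Measure.pi_singleton]
    simp only [coin_singleton, Finset.prod_const, Finset.card_univ, Fintype.card_fin]
    rw [← hν n b]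
    congr 1
    ext x
    simp [funext_iff]
  refine Measure.eq_infinitePi _ fun s t ht => ?_
  -- Any finite set of coordinates lies in an initial segment; pad with `Set.univ`.
  obtain ⟨n, hn⟩ : ∃ n, s ⊆ Finset.range n := s.exists_nat_subset_range
  let t' : ℕ → Set Bool := fun i => if i ∈ s then t i else Set.univ
  have h1 : (Set.pi s t : Set (ℕ → Bool)) =
      (fun x (i : Fin n) => x i) ⁻¹' (Set.univ.pi fun i : Fin n => t' i) := by
    ext x
    simp only [Set.mem_pi, Set.mem_preimage, Set.mem_univ, true_implies, t', Finset.mem_coe]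
    constructor
    · intro h i
      split_ifs with hi
      · exact h _ hi
      · trivial
    · intro h i hi
      have := h ⟨i, Finset.mem_range.1 (hn hi)⟩
      simpa [hi] using this
  rw [h1, ← Measure.map_apply (by fun_prop) (MeasurableSet.univ_pi fun i => .of_discrete), hmap,
    Measure.pi_pi, Fin.prod_univ_eq_prod_range (fun i => coin (t' i)) n,
    ← Finset.prod_subset hn (fun i _ hi => by
      simp only [t', hi, if_false, measure_univ])]
  exact Finset.prod_congr rfl fun i hi => by simp [t', hi]

/-- The fair coin measure on `ℕ → Bool`. -/
noncomputable abbrev coins : Measure (ℕ → Bool) := Measure.infinitePi (fun _ : ℕ => coin)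

lemma coins_cylinder (s : Finset ℕ) (b : ℕ → Bool) :
    coins {x | ∀ i ∈ s, x i = b i} = (1 / 2) ^ s.card := by
  have h : {x : ℕ → Bool | ∀ i ∈ s, x i = b i} = Set.pi s (fun i => {b i}) := by
    ext x; simp [Set.mem_pi]
  rw [h, coins, Measure.infinitePi_pi _ (fun i _ => measurableSet_singleton _)]
  simp [coin_singleton]

/-- The number of heads among the coordinates in `s` is binomial: the event splits into
the cylinders prescribing which `l`-element subset of `s` consists of heads. -/
lemma coins_count (s : Finset ℕ) (l : ℕ) :
    coins {x | (s.filter (fun i => x i = true)).card = l} =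
      (s.card.choose l : ENNReal) * (1 / 2) ^ s.card := by
  classical
  have h : {x : ℕ → Bool | (s.filter (fun i => x i = true)).card = l} =
      ⋃ T ∈ s.powersetCard l, {x | ∀ i ∈ s, x i = decide (i ∈ T)} := by
    ext x
    simp only [Set.mem_ofPred_eq, Set.mem_iUnion, Finset.mem_powersetCard, exists_prop]
    constructor
    · intro hx
      exact ⟨_, ⟨Finset.filter_subset _ _, hx⟩, fun i hi => by simp [hi]⟩
    · rintro ⟨T, ⟨hT, hc⟩, hx⟩
      rw [← hc]
      congr 1
      ext i
      simp only [Finset.mem_filter]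
      constructor
      · rintro ⟨hi, h⟩
        rw [hx i hi] at h
        simpa using h
      · intro hi
        exact ⟨hT hi, by rw [hx i (hT hi)]; simpa using hi⟩
  rw [h, measure_biUnion_finset]
  · simp only [coins_cylinder, Finset.sum_const, Finset.card_powersetCard, nsmul_eq_mul]
  · intro T hT T' hT' hne
    rw [Finset.mem_coe, Finset.mem_powersetCard] at hT hT'
    refine Set.disjoint_left.2 fun x hx hx' => hne ?_
    ext i
    constructor
    · intro hi
      have := (hx i (hT.1 hi)).symm.trans (hx' i (hT.1 hi))
      simpa [hi] using this
    · intro hi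
      have := (hx i (hT'.1 hi)).symm.trans (hx' i (hT'.1 hi))
      simpa [hi] using this
  · intro T _
    have : {x : ℕ → Bool | ∀ i ∈ s, x i = decide (i ∈ T)} =
        ⋂ i ∈ s, (fun x : ℕ → Bool => x i) ⁻¹' {decide (i ∈ T)} := by ext; simp
    rw [this]
    exact Finset.measurableSet_biInter _ fun i _ => measurable_pi_apply i (measurableSet_singleton _)

/-- The `±1`-valued digit attached to a coin toss. -/
def sgn (b : Bool) : ℝ := if b then 1 else -1

lemma measurable_sgn : Measurable sgn := measurable_of_finite _

lemma signedSum_eq (x : ℕ → Bool) (n : ℕ) :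
    (signedSum x n : ℝ) = ∑ i ∈ Finset.range n, sgn (x i) := by
  simp [signedSum, sgn, apply_ite (Int.cast : ℤ → ℝ)]

lemma sum_sgn_eq (s : Finset ℕ) (x : ℕ → Bool) :
    ∑ i ∈ s, sgn (x i) = 2 * ((s.filter (fun i => x i = true)).card : ℝ) - s.card := by
  have h : ∀ i, sgn (x i) = 2 * (if x i = true then 1 else 0) - 1 := by
    intro i; unfold sgn; split_ifs <;> norm_num
  simp only [h, Finset.sum_sub_distrib, ← Finset.mul_sum, Finset.sum_boole]
  simp

lemma iIndepFun_coins : iIndepFun (fun i (x : ℕ → Bool) => x i) coins :=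
  iIndepFun_infinitePi (X := fun _ b => b) (fun _ => measurable_id)

lemma integral_sgn (i : ℕ) (c : ℝ) : ∫ x, c * sgn (x i) ∂coins = 0 := by
  have h := (measurePreserving_eval_infinitePi (fun _ : ℕ => coin) i)
  have h2 : ∫ x, c * sgn (x i) ∂coins = ∫ b, c * sgn b ∂coin := by
    rw [← h.map_eq, integral_map (measurable_pi_apply i).aemeasurable
      ((measurable_sgn.const_mul c).aestronglyMeasurable)]
  rw [h2, integral_fintype (Integrable.of_finite)]
  simp [measureReal_def, coin_singleton, sgn]

/-! ### Tail bounds for the partial sums -/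

/-- Hoeffding's inequality for `±` the partial sums; `c` is `1` or `-1`. -/
lemma hoeffding (n : ℕ) (c : ℝ) (hc : |c| = 1) (t : ℝ) (ht : 0 ≤ t) :
    coins.real {x | t ≤ c * (signedSum x n : ℝ)} ≤ Real.exp (-t ^ 2 / (2 * n)) := by
  have hi : iIndepFun (fun i (x : ℕ → Bool) => c * sgn (x i)) coins :=
    iIndepFun_coins.comp (fun _ b => c * sgn b) (fun _ => measurable_sgn.const_mul c)
  have hs : ∀ i < n, HasSubgaussianMGF (fun x : ℕ → Bool => c * sgn (x i)) 1 coins := by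
    intro i _
    have := hasSubgaussianMGF_of_mem_Icc_of_integral_eq_zero (μ := coins) (a := -1) (b := 1)
      (X := fun x : ℕ → Bool => c * sgn (x i))
      ((measurable_sgn.const_mul c).comp (measurable_pi_apply i)).aemeasurable
      (Eventually.of_forall fun x => by
        rw [Set.mem_Icc, ← abs_le, abs_mul, hc, sgn]; split_ifs <;> simp) (integral_sgn i c)
    convert this using 1
    ext
    norm_num
  have := HasSubgaussianMGF.measure_sum_range_ge_le_of_iIndepFun hi hs ht
  simpa [signedSum_eq, Finset.mul_sum] using this

/-- The central binomial coefficient has the correct order `4 ^ m / √m`; a bound of order `4 ^ m / m`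
would be too weak for `tail_lower`. -/
lemma four_pow_le_sqrt_mul_centralBinom (m : ℕ) (hm : 1 ≤ m) :
    (4 : ℝ) ^ m ≤ 2 * √m * m.centralBinom := by
  have key : (16 : ℝ) ^ m ≤ 4 * m * (m.centralBinom : ℝ) ^ 2 := by
    induction m, hm using Nat.le_induction with
    | base => norm_num [Nat.centralBinom]
    | succ m hm ih =>
      have h : ((m : ℝ) + 1) * ((m + 1).centralBinom : ℝ) =
          2 * (2 * m + 1) * (m.centralBinom : ℝ) := by
        exact_mod_cast Nat.succ_mul_centralBinom_succ m
      have hpos : (0 : ℝ) < m + 1 := by positivity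
      refine le_of_mul_le_mul_left ?_ hpos
      calc ((m : ℝ) + 1) * 16 ^ (m + 1) = 16 * (m + 1) * 16 ^ m := by ring
        _ ≤ 16 * (m + 1) * (4 * m * (m.centralBinom : ℝ) ^ 2) := by gcongr
        _ ≤ 4 * (2 * (2 * m + 1) * (m.centralBinom : ℝ)) ^ 2 := by
          nlinarith [sq_nonneg (m.centralBinom : ℝ)]
        _ = _ := by rw [← h]; push_cast; ring
  refine le_of_sq_le_sq ?_ (by positivity)
  calc ((4 : ℝ) ^ m) ^ 2 = 16 ^ m := by rw [← pow_mul, mul_comm, pow_mul]; norm_num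
    _ ≤ _ := key
    _ = _ := by rw [mul_pow, mul_pow, Real.sq_sqrt (by positivity)]; ring

/-- Gaussian-type lower bound for binomial coefficients near the centre: consecutive ratios are
`(m - i) / (m + i + 1) ≥ exp (-(2 i + 1) / (m - J))`, and the odd numbers sum to squares. -/
lemma centralBinom_mul_exp_le_choose (m J : ℕ) (hJ : J < m) (i : ℕ) (hi : i ≤ J) :
    (m.centralBinom : ℝ) * Real.exp (-(i : ℝ) ^ 2 / (m - J)) ≤ (2 * m).choose (m + i) := by
  have hD : (0 : ℝ) < m - J := sub_pos.2 (by exact_mod_cast hJ)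
  induction i with
  | zero => simp [Nat.centralBinom]
  | succ i ih =>
    have ih := ih (by omega)
    have hch : ((2 * m).choose (m + (i + 1)) : ℝ) * (m + i + 1) =
        (2 * m).choose (m + i) * (m - i) := by
      have h := Nat.choose_succ_right_eq (2 * m) (m + i)
      have h2 : 2 * m - (m + i) = m - i := by omega
      rw [h2] at h
      have h3 : ((m - i : ℕ) : ℝ) = m - i := Nat.cast_sub (by omega)
      rw [← h3]
      exact_mod_cast h
    have hiJ : (i : ℝ) + 1 ≤ J := by exact_mod_cast hi
    have hmi : (0 : ℝ) < m - i := by linarith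
    have hratio : Real.exp (-(2 * i + 1) / (m - J)) * (m + i + 1) ≤ m - i := by
      have h1 : ((m : ℝ) + i + 1) / (m - i) ≤ Real.exp ((2 * i + 1) / (m - J)) := by
        calc ((m : ℝ) + i + 1) / (m - i) = (2 * i + 1) / (m - i) + 1 := by field_simp; ring
          _ ≤ (2 * i + 1) / (m - J) + 1 := by gcongr; linarith
          _ ≤ _ := Real.add_one_le_exp _
      rw [neg_div, Real.exp_neg, inv_mul_le_iff₀ (Real.exp_pos _)]
      rwa [div_le_iff₀ hmi] at h1
    have hpos : (0 : ℝ) < m + i + 1 := by positivity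
    refine le_of_mul_le_mul_right ?_ hpos
    rw [hch]
    calc (m.centralBinom : ℝ) * Real.exp (-((i + 1 : ℕ) : ℝ) ^ 2 / (m - J)) * (m + i + 1)
        = (m.centralBinom : ℝ) * Real.exp (-(i : ℝ) ^ 2 / (m - J)) *
            (Real.exp (-(2 * i + 1) / (m - J)) * (m + i + 1)) := by
          rw [mul_assoc, mul_assoc, ← mul_assoc (Real.exp _) (Real.exp _), ← Real.exp_add]
          congr 3
          push_cast
          ring
      _ ≤ _ := by gcongr

/-- Moderate-deviation lower bound for the sum over a block of `2 m` coordinates. The range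
`[j, j + r)` of values contributes `r ≥ √m` atoms, which absorbs the factor `1 / √m` of the
local estimate. -/
lemma tail_lower (s : Finset ℕ) (m j r : ℕ) (hs : s.card = 2 * m) (hr : √m ≤ r)
    (h : j + r < m) :
    1 / 2 * Real.exp (-((j + r : ℕ) : ℝ) ^ 2 / (m - (j + r : ℕ))) ≤
      coins.real {x | 2 * (j : ℝ) ≤ ∑ i ∈ s, sgn (x i)} := by
  set E := Real.exp (-((j + r : ℕ) : ℝ) ^ 2 / (m - (j + r : ℕ))) with hE
  have hD : (0 : ℝ) < m - (j + r : ℕ) := sub_pos.2 (by exact_mod_cast h)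
  have hm : (0 : ℝ) < √m := Real.sqrt_pos.2 (by exact_mod_cast (by omega : 0 < m))
  have hmeas : ∀ l : ℕ, MeasurableSet {x : ℕ → Bool | (s.filter (fun i => x i = true)).card = l} := by
    intro l
    have : Measurable (fun x : ℕ → Bool => ∑ i ∈ s, if x i = true then 1 else 0) := by
      refine Finset.measurable_sum _ fun i _ => ?_
      exact (measurable_of_finite (fun b : Bool => if b = true then 1 else 0)).comp
        (measurable_pi_apply i)
    simp only [Finset.card_filter]
    exact this (measurableSet_singleton l)
  have hatom : ∀ i ∈ Finset.Ico j (j + r), 1 / (2 * √m) * E ≤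
      coins.real {x | (s.filter (fun i => x i = true)).card = m + i} := by
    intro i hi
    rw [Finset.mem_Ico] at hi
    rw [measureReal_def, coins_count, hs, ENNReal.toReal_mul, ENNReal.toReal_pow]
    have h1 := centralBinom_mul_exp_le_choose m (j + r) h i hi.2.le
    have h2 := four_pow_le_sqrt_mul_centralBinom m (by omega)
    have h3 : E ≤ Real.exp (-(i : ℝ) ^ 2 / (m - (j + r : ℕ))) := by
      rw [hE]
      gcongr
      exact hi.2.le
    have h4 : ((1 / 2 : ENNReal).toReal) ^ (2 * m) = 1 / (4 : ℝ) ^ m := by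
      rw [pow_mul, ← one_div_pow]; norm_num
    rw [h4, ENNReal.toReal_natCast]
    calc 1 / (2 * √m) * E ≤ (m.centralBinom / 4 ^ m) * E := by
          gcongr ?_ * _
          rw [div_le_div_iff₀ (by positivity) (by positivity)]
          linarith
      _ ≤ (m.centralBinom / 4 ^ m) * Real.exp (-(i : ℝ) ^ 2 / (m - (j + r : ℕ))) := by gcongr
      _ = (m.centralBinom * Real.exp (-(i : ℝ) ^ 2 / (m - (j + r : ℕ)))) * (1 / 4 ^ m) := by ring
      _ ≤ _ := by gcongr
  calc 1 / 2 * E ≤ r * (1 / (2 * √m) * E) := by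
        rw [← mul_assoc]
        gcongr
        rw [mul_one_div, div_le_div_iff₀ (by positivity) (by positivity)]
        linarith
    _ = ∑ i ∈ Finset.Ico j (j + r), 1 / (2 * √m) * E := by simp
    _ ≤ ∑ i ∈ Finset.Ico j (j + r),
          coins.real {x | (s.filter (fun i => x i = true)).card = m + i} :=
        Finset.sum_le_sum hatom
    _ = coins.real (⋃ i ∈ Finset.Ico j (j + r),
          {x | (s.filter (fun i => x i = true)).card = m + i}) := by
        rw [measureReal_biUnion_finset]
        · intro a _ b _ hab
          refine Set.disjoint_left.2 fun x hx hx' => hab ?_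
          have := hx.symm.trans hx'
          omega
        · intro i _
          exact hmeas _
    _ ≤ _ := by
        refine measureReal_mono ?_
        intro x hx
        simp only [Set.mem_iUnion, Finset.mem_Ico, Set.mem_ofPred_eq, exists_prop] at hx ⊢
        obtain ⟨i, hi, hx⟩ := hx
        rw [sum_sgn_eq, hx, hs]
        push_cast
        have : (j : ℝ) ≤ i := by exact_mod_cast hi.1
        linarith

/-! ### Asymptotics of the iterated logarithm along `2 * k!` -/

/-- The iterated logarithm of `2 * k!`. -/
noncomputable def LL (k : ℕ) : ℝ := Real.log (Real.log (2 * (k.factorial : ℝ)))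

lemma phi_two_mul_factorial (k : ℕ) :
    phi (2 * k.factorial) = 2 * √(k.factorial * LL k) := by
  have h : (2 : ℝ) = √4 := by
    rw [show (4 : ℝ) = 2 ^ 2 by norm_num, Real.sqrt_sq (by norm_num)]
  rw [phi, LL, h, ← Real.sqrt_mul (by norm_num), ← h]
  congr 1
  push_cast
  ring

lemma half_le_log (k : ℕ) (hk : 1 ≤ k) : (k : ℝ) / 2 ≤ Real.log (2 * (k.factorial : ℝ)) := by
  have h : (2 : ℝ) ^ k ≤ 2 * (k.factorial : ℝ) := by
    have : 2 ^ k ≤ 2 * k.factorial := by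
      induction k, hk using Nat.le_induction with
      | base => simp
      | succ k hk ih =>
        rw [pow_succ, Nat.factorial_succ]
        nlinarith [Nat.factorial_pos k]
    exact_mod_cast this
  have h2 := Real.log_le_log (by positivity) h
  rw [Real.log_pow] at h2
  have := Real.log_two_gt_d9
  have hk0 : (0 : ℝ) ≤ k := by positivity
  nlinarith

lemma log_half_le_LL (k : ℕ) (hk : 1 ≤ k) : Real.log ((k : ℝ) / 2) ≤ LL k :=
  Real.log_le_log (by positivity) (half_le_log k hk)

lemma tendsto_LL : Tendsto LL atTop atTop := by
  refine tendsto_atTop_mono' _ (f₁ := fun k : ℕ => Real.log ((k : ℝ) / 2)) ?_ ?_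
  · filter_upwards [eventually_ge_atTop 1] with k hk using log_half_le_LL k hk
  · exact Real.tendsto_log_atTop.comp
      (tendsto_natCast_atTop_atTop.atTop_div_const (by norm_num))

lemma LL_mono (k : ℕ) (hk : 1 ≤ k) : LL k ≤ LL (k + 1) := by
  have h := half_le_log k hk
  have h1 : (1 : ℝ) ≤ k := by exact_mod_cast hk
  refine Real.log_le_log (by linarith) (Real.log_le_log (by positivity) ?_)
  gcongr
  omega

lemma LL_le_mul_log (p : ℝ) (hp : 1 < p) : ∀ᶠ k : ℕ in atTop, LL k ≤ p * Real.log k := by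
  have h := (isLittleO_log_rpow_atTop (sub_pos.2 hp)).bound (show (0 : ℝ) < 1 / 2 by norm_num)
  have h' := tendsto_natCast_atTop_atTop (R := ℝ) |>.eventually h
  filter_upwards [h', eventually_ge_atTop 2] with k hk hk2
  have hk2' : (2 : ℝ) ≤ k := by exact_mod_cast hk2
  have hk0 : (0 : ℝ) < k := by linarith
  have hhalf := half_le_log k (by omega)
  rw [Real.norm_eq_abs, Real.norm_of_nonneg (by positivity)] at hk
  have hk' := (le_abs_self _).trans hk
  have hpow : (k : ℝ) ^ p = k * (k : ℝ) ^ (p - 1) := by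
    rw [Real.rpow_sub_one hk0.ne']; field_simp
  have hone : (1 : ℝ) ≤ (k : ℝ) ^ (p - 1) := Real.one_le_rpow (by linarith) (by linarith)
  have hlog2 : Real.log 2 ≤ 1 := by have := Real.log_two_lt_d9; linarith
  have hfac : Real.log (k.factorial : ℝ) ≤ k * Real.log k := by
    rw [← Real.log_pow]
    refine Real.log_le_log (by positivity) ?_
    exact_mod_cast Nat.factorial_le_pow k
  rw [← Real.log_rpow hk0]
  refine Real.log_le_log (by linarith) ?_
  rw [Real.log_mul (by norm_num) (by positivity), hpow]
  nlinarith

lemma LL_le_mul_factorial (c : ℝ) (hc : 0 < c) :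
    ∀ᶠ k : ℕ in atTop, LL k ≤ c * (k.factorial : ℝ) := by
  have h := Real.isLittleO_log_id_atTop.bound (show (0 : ℝ) < c / 2 by positivity)
  have ht : Tendsto (fun k : ℕ => 2 * (k.factorial : ℝ)) atTop atTop :=
    (tendsto_natCast_atTop_atTop.comp factorial_tendsto_atTop).const_mul_atTop (by norm_num)
  filter_upwards [ht.eventually h, eventually_ge_atTop 1] with k hk hk1
  have hk1' : (1 : ℝ) ≤ k := by exact_mod_cast hk1
  have hpos := half_le_log k hk1
  have hlog : LL k ≤ Real.log (2 * (k.factorial : ℝ)) :=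
    Real.log_le_self (by linarith)
  rw [Real.norm_eq_abs, id, Real.norm_of_nonneg (by positivity)] at hk
  have := le_abs_self (Real.log (2 * (k.factorial : ℝ)))
  linarith

/-! ### The upper bound -/

/-- Along `n = 2 * k!`, Hoeffding's bounds are summable; `c` is `1` or `-1`. -/
lemma ae_eventually_upper (c : ℝ) (hc : |c| = 1) (ε : ℝ) (hε : 0 < ε) :
    ∀ᵐ x ∂coins, ∀ᶠ k : ℕ in atTop,
      c * (signedSum x (2 * k.factorial) : ℝ) < (1 + ε) * phi (2 * k.factorial) := by
  have hsum : Summable fun k : ℕ => coins.real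
      {x | (1 + ε) * phi (2 * k.factorial) ≤ c * (signedSum x (2 * k.factorial) : ℝ)} := by
    have hg : Summable fun k : ℕ => (2 : ℝ) ^ (1 + ε) * ((k : ℝ) ^ (1 + ε))⁻¹ :=
      (Real.summable_nat_rpow_inv.2 (by linarith)).mul_left _
    refine hg.of_norm_bounded_eventually_nat ?_
    filter_upwards [eventually_ge_atTop 1, tendsto_LL.eventually_ge_atTop 0] with k hk hL
    have hk0 : (0 : ℝ) < k := by exact_mod_cast hk
    have hf : (0 : ℝ) < k.factorial := by exact_mod_cast k.factorial_pos
    have hphi : 0 ≤ phi (2 * k.factorial) := Real.sqrt_nonneg _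
    rw [Real.norm_of_nonneg measureReal_nonneg]
    refine (hoeffding _ c hc _ (by positivity)).trans ?_
    have hexp : -((1 + ε) * phi (2 * k.factorial)) ^ 2 / (2 * ((2 * k.factorial : ℕ) : ℝ)) =
        -((1 + ε) ^ 2 * LL k) := by
      rw [phi_two_mul_factorial, mul_pow, mul_pow, Real.sq_sqrt (by positivity)]
      push_cast
      field_simp
    have hlow := log_half_le_LL k hk
    calc _ = Real.exp (-((1 + ε) ^ 2 * LL k)) := by rw [hexp]
      _ ≤ Real.exp (-((1 + ε) * Real.log ((k : ℝ) / 2))) := by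
        rw [Real.exp_le_exp, neg_le_neg_iff]
        have h1 : (1 + ε) * Real.log ((k : ℝ) / 2) ≤ (1 + ε) * LL k := by gcongr
        nlinarith [mul_nonneg hε.le hL, mul_nonneg (sq_nonneg ε) hL]
      _ = ((k : ℝ) / 2) ^ (-(1 + ε)) := by
        rw [Real.rpow_def_of_pos (by positivity)]; ring_nf
      _ = _ := by
        rw [Real.rpow_neg (by positivity), Real.div_rpow hk0.le (by norm_num), inv_div,
          div_eq_mul_inv]
  have h := ae_eventually_notMem (μ := coins) (s := fun k : ℕ =>
    {x | (1 + ε) * phi (2 * k.factorial) ≤ c * (signedSum x (2 * k.factorial) : ℝ)}) (by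
      have := hsum.tsum_ofReal_ne_top
      simpa only [measureReal_def, ENNReal.ofReal_toReal (measure_ne_top _ _)] using this)
  filter_upwards [h] with x hx
  filter_upwards [hx] with k hk
  simpa using hk

/-! ### Independent blocks and the lower bound -/

/-- The event that the signed digits with index in `[N k, N (k + 1))` have sum at least `t`. -/
def blockEvent (N : ℕ → ℕ) (t : ℕ → ℝ) (k : ℕ) : Set (ℕ → Bool) :=
  {x | t k ≤ ∑ i ∈ Finset.Ico (N k) (N (k + 1)), sgn (x i)}

lemma measurableSet_blockEvent (N : ℕ → ℕ) (t : ℕ → ℝ) (k : ℕ) :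
    MeasurableSet (blockEvent N t k) :=
  measurableSet_le measurable_const
    (Finset.measurable_sum _ fun i _ => measurable_sgn.comp (measurable_pi_apply i))

lemma iIndepSet_blockEvent (N : ℕ → ℕ) (hN : Monotone N) (t : ℕ → ℝ) :
    iIndepSet (blockEvent N t) coins := by
  classical
  rw [iIndepSet_iff_meas_biInter (measurableSet_blockEvent N t)]
  intro s
  -- Peel off the last block: the earlier ones only involve the coordinates below `N a`.
  induction s using Finset.induction_on_max with
  | empty => simp
  | insert a s hlt ih =>
    have ha : a ∉ s := fun h => (hlt a h).false
    rw [Finset.prod_insert ha, ← ih, Finset.set_biInter_insert]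
    set S := Finset.range (N a)
    set T := Finset.Ico (N a) (N (a + 1))
    have hST : Disjoint T S := by
      refine Finset.disjoint_left.2 fun i hi hi' => ?_
      have h1 := (Finset.mem_Ico.1 hi).1
      have h2 := Finset.mem_range.1 hi'
      omega
    have hind := iIndepFun_coins.indepFun_finset T S hST (fun i => measurable_pi_apply i)
    -- Extension by `false`; the block sums do not see the coordinates outside `U`.
    let e (U : Finset ℕ) (y : U → Bool) : ℕ → Bool := fun i => if h : i ∈ U then y ⟨i, h⟩ else false
    have hA : blockEvent N t a =
        (fun (x : ℕ → Bool) (i : T) => x i) ⁻¹' {y | e T y ∈ blockEvent N t a} := by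
      ext x
      simp only [blockEvent, Set.mem_preimage, Set.mem_ofPred_eq]
      rw [Finset.sum_congr rfl fun i (hi : i ∈ T) => ?_]
      simp [e, hi]
    have hB : (⋂ k ∈ s, blockEvent N t k) =
        (fun (x : ℕ → Bool) (i : S) => x i) ⁻¹' {y | e S y ∈ ⋂ k ∈ s, blockEvent N t k} := by
      ext x
      simp only [blockEvent, Set.mem_preimage, Set.mem_ofPred_eq, Set.mem_iInter]
      refine forall₂_congr fun k hk => ?_
      rw [Finset.sum_congr rfl fun i hi => ?_]
      have h1 := (Finset.mem_Ico.1 hi).2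
      have h2 : N (k + 1) ≤ N a := hN (hlt k hk)
      have h3 : i ∈ S := Finset.mem_range.2 (h1.trans_le h2)
      simp [e, h3]
    rw [hA, hB]
    exact hind.measure_inter_preimage_eq_mul _ _ .of_discrete .of_discrete

/-- The block between times `2 k!` and `2 (k + 1)!` has sum at least `(1 - ε / 2) φ (2 (k + 1)!)`
with probability at least `1 / (2 (k + 1))`, for large `k`. With `M = (k + 1)!`, `L = LL (k + 1)` and
`s = √(M L) = φ (2 M) / 2`, all lower-order corrections in `tail_lower` are at most `(ε / 6) s` or
`(ε / 6) M`, so the exponent there is at most `(1 - ε / 3) L`, hence at most `log (k + 1)`. -/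
lemma block_prob (ε : ℝ) (hε : 0 < ε) (hε1 : ε ≤ 1) : ∀ᶠ k : ℕ in atTop,
    1 / 2 * (1 / ((k + 1 : ℕ) : ℝ)) ≤ coins.real (blockEvent (fun k => 2 * k.factorial)
      (fun k => (1 - ε / 2) * phi (2 * (k + 1).factorial)) k) := by
  have hsh := tendsto_add_atTop_nat 1
  have hp : 1 < (1 - ε / 3)⁻¹ := (one_lt_inv₀ (by linarith)).2 (by linarith)
  filter_upwards [hsh.eventually (LL_le_mul_log _ hp),
    hsh.eventually (LL_le_mul_factorial ((ε / 6) ^ 2) (by positivity)),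
    hsh.eventually (tendsto_LL.eventually_ge_atTop ((18 / ε) ^ 2)),
    (tendsto_natCast_atTop_atTop (R := ℝ)).eventually_ge_atTop (6 / ε)] with k h1 h2 h3 h4
  set L := LL (k + 1)
  set M : ℝ := ((k + 1).factorial : ℝ) with hM
  have hM1 : 1 ≤ M := Nat.one_le_cast.2 (k + 1).factorial_pos
  have hL0 : 0 ≤ L := le_trans (by positivity) h3
  set s := √(M * L) with hs
  have hs0 : 0 ≤ s := Real.sqrt_nonneg _
  have hs2 : s ^ 2 = M * L := Real.sq_sqrt (by positivity)
  have hsM : s ≤ ε / 6 * M := by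
    refine le_of_sq_le_sq ?_ (by positivity)
    rw [hs2]; nlinarith
  have hsqM : 1 ≤ √M := by rwa [Real.one_le_sqrt]
  have hsqL : 18 / ε ≤ √L := Real.le_sqrt_of_sq_le h3
  have hMs : 3 * √M ≤ ε / 6 * s := by
    rw [hs, Real.sqrt_mul (by positivity)]
    have h5 : 18 ≤ ε * √L := by rwa [div_le_iff₀' hε] at hsqL
    nlinarith
  have hfac : ((k : ℝ) + 1) * (k.factorial : ℝ) = M := by
    rw [hM, Nat.factorial_succ]; push_cast; ring
  have hkM : (k.factorial : ℝ) ≤ ε / 6 * M := by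
    rw [div_le_iff₀ hε] at h4
    rw [← hfac]
    have : (0 : ℝ) < k.factorial := by positivity
    nlinarith
  set m := k * k.factorial with hm
  have hmM : (m : ℝ) = M - k.factorial := by rw [hm, ← hfac]; push_cast; ring
  have hcard : (Finset.Ico (2 * k.factorial) (2 * (k + 1).factorial)).card = 2 * m := by
    rw [Nat.card_Ico, Nat.factorial_succ, hm]
    have : 2 * ((k + 1) * k.factorial) = 2 * k.factorial + 2 * (k * k.factorial) := by ring
    omega
  set j := ⌈(1 - ε / 2) * s⌉₊
  set r := ⌈√(m : ℝ)⌉₊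
  have hj : (1 - ε / 2) * s ≤ j := Nat.le_ceil _
  have hj' : (j : ℝ) ≤ (1 - ε / 2) * s + 1 :=
    (Nat.ceil_lt_add_one (mul_nonneg (by linarith) hs0)).le
  have hr' : (r : ℝ) ≤ √M + 1 := by
    have : √(m : ℝ) ≤ √M := Real.sqrt_le_sqrt (by rw [hmM]; simp)
    linarith [(Nat.ceil_lt_add_one (Real.sqrt_nonneg (m : ℝ))).le]
  have hjr : ((j + r : ℕ) : ℝ) ≤ (1 - ε / 3) * s := by push_cast; linarith
  have hjrs : (1 - ε / 3) * s ≤ s := by nlinarith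
  have hden : (1 - ε / 3) * M ≤ (m : ℝ) - (j + r : ℕ) := by rw [hmM]; linarith
  have hpos : 0 < (1 - ε / 3) * M := mul_pos (by linarith) (by linarith)
  have hlt : j + r < m := by
    have : ((j + r : ℕ) : ℝ) < m := by linarith
    exact_mod_cast this
  have hkey := tail_lower _ m j r hcard (Nat.le_ceil _) hlt
  have hexp : ((j + r : ℕ) : ℝ) ^ 2 / (m - (j + r : ℕ)) ≤ Real.log ((k + 1 : ℕ) : ℝ) := by
    calc ((j + r : ℕ) : ℝ) ^ 2 / (m - (j + r : ℕ))
        ≤ ((1 - ε / 3) * s) ^ 2 / ((1 - ε / 3) * M) := by gcongr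
      _ = (1 - ε / 3) * L := by
        rw [mul_pow, hs2]
        have : 1 - ε / 3 ≠ 0 := by linarith
        field_simp
      _ ≤ (1 - ε / 3) * ((1 - ε / 3)⁻¹ * Real.log ((k + 1 : ℕ) : ℝ)) := by
        gcongr
        linarith
      _ = _ := by
        rw [← mul_assoc, mul_inv_cancel₀ (by linarith), one_mul]
  calc 1 / 2 * (1 / ((k + 1 : ℕ) : ℝ))
      = 1 / 2 * Real.exp (-Real.log ((k + 1 : ℕ) : ℝ)) := by
        rw [Real.exp_neg, Real.exp_log (by positivity), one_div ((k + 1 : ℕ) : ℝ)]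
    _ ≤ 1 / 2 * Real.exp (-((j + r : ℕ) : ℝ) ^ 2 / (m - (j + r : ℕ))) := by
        rw [neg_div]
        gcongr
    _ ≤ _ := hkey
    _ ≤ _ := by
        refine measureReal_mono ?_
        intro x hx
        simp only [blockEvent, Set.mem_ofPred_eq, phi_two_mul_factorial] at hx ⊢
        refine le_trans ?_ hx
        change (1 - ε / 2) * (2 * s) ≤ _
        linarith

lemma ae_frequently_lower (ε : ℝ) (hε : 0 < ε) (hε1 : ε ≤ 1) :
    ∀ᵐ x ∂coins, ∃ᶠ k : ℕ in atTop, x ∈ blockEvent (fun k => 2 * k.factorial)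
      (fun k => (1 - ε / 2) * phi (2 * (k + 1).factorial)) k := by
  set A := blockEvent (fun k => 2 * k.factorial)
      (fun k => (1 - ε / 2) * phi (2 * (k + 1).factorial))
  have hmeas : ∀ k, MeasurableSet (A k) := measurableSet_blockEvent _ _
  have hmono : Monotone fun k : ℕ => 2 * k.factorial := fun a b h =>
    Nat.mul_le_mul_left _ (Nat.factorial_le h)
  have hdiv : ∑' k, coins (A k) = ⊤ := by
    by_contra h
    have hsum : Summable fun k => coins.real (A k) := ENNReal.summable_toReal h
    have hs : Summable fun k : ℕ => 1 / 2 * (1 / ((k + 1 : ℕ) : ℝ)) := by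
      refine hsum.of_norm_bounded_eventually_nat ?_
      filter_upwards [block_prob ε hε hε1] with k hk
      rwa [Real.norm_of_nonneg (by positivity)]
    rw [summable_mul_left_iff (by norm_num)] at hs
    exact Real.not_summable_one_div_natCast
      ((summable_nat_add_iff (f := fun k : ℕ => 1 / (k : ℝ)) 1).1 hs)
  have h1 := measure_limsup_eq_one hmeas (iIndepSet_blockEvent _ hmono _) hdiv
  have h2 := (mem_ae_iff_prob_eq_one (MeasurableSet.measurableSet_limsup hmeas)).2 h1
  filter_upwards [h2] with x hx
  exact mem_limsup_iff_frequently_mem.1 hx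

/-- Combined with `ae_eventually_upper`, this makes the contribution of the first `2 * k!` tosses
negligible at time `2 * (k + 1)!`. -/
lemma phi_negligible (ε : ℝ) (hε : 0 < ε) : ∀ᶠ k : ℕ in atTop,
    (1 + ε) * phi (2 * k.factorial) ≤ ε / 2 * phi (2 * (k + 1).factorial) := by
  filter_upwards [tendsto_LL.eventually_ge_atTop 0, eventually_ge_atTop 1,
    (tendsto_natCast_atTop_atTop (R := ℝ)).eventually_ge_atTop ((1 + ε) ^ 2 / (ε / 2) ^ 2)]
    with k hL hk1 hk
  have hmono := LL_mono k hk1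
  have hL' : 0 ≤ LL (k + 1) := hL.trans hmono
  rw [phi_two_mul_factorial, phi_two_mul_factorial]
  refine le_of_sq_le_sq ?_ (by positivity)
  rw [mul_pow, mul_pow, mul_pow, mul_pow, Real.sq_sqrt (by positivity),
    Real.sq_sqrt (by positivity), Nat.factorial_succ]
  rw [div_le_iff₀ (by positivity)] at hk
  push_cast
  calc (1 + ε) ^ 2 * (2 ^ 2 * (k.factorial * LL k))
      ≤ (k * (ε / 2) ^ 2) * (2 ^ 2 * (k.factorial * LL (k + 1))) := by gcongr
    _ ≤ ((k + 1) * (ε / 2) ^ 2) * (2 ^ 2 * (k.factorial * LL (k + 1))) := by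
        gcongr; linarith
    _ = _ := by ring

lemma ae_infinite (ε : ℝ) (hε : 0 < ε) (hε1 : ε ≤ 1) :
    ∀ᵐ x ∂coins,
      {n : ℕ | 3 ≤ n ∧ (signedSum x n : ℝ) / phi n ∈ Set.Icc (1 - ε) (1 + ε)}.Infinite := by
  filter_upwards [ae_frequently_lower ε hε hε1, ae_eventually_upper 1 (by simp) ε hε,
    ae_eventually_upper (-1) (by simp) ε hε] with x hlow hup hneg
  rw [← Nat.frequently_atTop_iff_infinite]
  have htend : Tendsto (fun k : ℕ => 2 * (k + 1).factorial) atTop atTop := by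
    refine tendsto_atTop_mono (fun k => ?_) tendsto_id
    have := Nat.self_le_factorial (k + 1)
    simp only [id]
    omega
  refine htend.frequently ?_
  have hsh := tendsto_add_atTop_nat 1
  refine (hlow.and_eventually ((hsh.eventually hup).and (hneg.and ((phi_negligible ε hε).and
    ((eventually_ge_atTop 2).and (hsh.eventually (tendsto_LL.eventually_gt_atTop 0))))))).mono ?_
  rintro k ⟨hA, hU, hNeg, hphi, hk, hL⟩
  have hpos : 0 < phi (2 * (k + 1).factorial) := by
    rw [phi_two_mul_factorial]
    positivity
  have hsplit : (signedSum x (2 * (k + 1).factorial) : ℝ) = signedSum x (2 * k.factorial) +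
      ∑ i ∈ Finset.Ico (2 * k.factorial) (2 * (k + 1).factorial), sgn (x i) := by
    rw [signedSum_eq, signedSum_eq, Finset.sum_range_add_sum_Ico]
    exact Nat.mul_le_mul_left _ (Nat.factorial_le k.le_succ)
  refine ⟨?_, ?_, ?_⟩
  · have := Nat.self_le_factorial (k + 1)
    omega
  · rw [le_div_iff₀ hpos, hsplit]
    have hA' : (1 - ε / 2) * phi (2 * (k + 1).factorial) ≤ _ := hA
    linarith
  · rw [div_le_iff₀ hpos]
    linarith

/-- **Law of the Iterated Logarithm (recurrence form) for the fair coin.**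
If `ν` is the product probability measure on `ℕ → Bool` under which the coordinates are
independent fair coin tosses (characterized by its cylinder probabilities), then for
`ν`-almost every `x`, for every `ε > 0` the set
`{n : n ≥ 3 ∧ Sₙ(x)/φ(n) ∈ [1 − ε, 1 + ε]}` is infinite. -/
theorem lil_fair_coin
    (ν : Measure (ℕ → Bool)) [IsProbabilityMeasure ν]
    (hν : ∀ (n : ℕ) (b : Fin n → Bool),
      ν {x : ℕ → Bool | ∀ i : Fin n, x i = b i} = (1 / 2 : ENNReal) ^ n) :
    ∀ᵐ x ∂ν, ∀ ε : ℝ, 0 < ε →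
      {n : ℕ | 3 ≤ n ∧ (signedSum x n : ℝ) / phi n ∈ Set.Icc (1 - ε) (1 + ε)}.Infinite := by
  rw [eq_infinitePi_coin ν hν]
  have h : ∀ᵐ x ∂coins, ∀ j : ℕ, {n : ℕ | 3 ≤ n ∧ (signedSum x n : ℝ) / phi n ∈
      Set.Icc (1 - 1 / ((j : ℝ) + 1)) (1 + 1 / ((j : ℝ) + 1))}.Infinite := by
    refine ae_all_iff.2 fun j => ae_infinite _ (by positivity) ?_
    rw [div_le_one (by positivity)]
    simp
  filter_upwards [h] with x hx ε hε
  obtain ⟨j, hj⟩ := exists_nat_one_div_lt hε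
  refine (hx j).mono fun n hn => ⟨hn.1, ?_, ?_⟩
  · linarith [hn.2.1]
  · linarith [hn.2.2]
end

section
/- (Martin-Löf–Solovay–Chaitin random sequences obey the Law of the Iterated Logarithm.) For every Martin-Löf–Solovay–Chaitin random sequence x : ℕ → Bool and every ε > 0, the set {n ∈ ℕ : n ≥ 3 and Sₙ(x)/φ(n) ∈ (1 − ε, 1 + ε)} is infinite. -/
/-!
The proof has a computability half and a probability half.

*Computability.* Let `A K` be a decidable set of strings of length `N K`. If the probability of
`A K` is arbitrarily small for suitable `K`, then a random sequence cannot have a prefix in every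
`A K` (`LIL.exists_not_of_random`): given `m`, search for a `K` with `pr (A K) ≤ 4⁻ᵐ`; an element
of `A K` is then determined by `m` and an index of `N K - 2m` bits, and coding it as `1ᵐ0` followed
by that index gives a prefix-free computer that saves about `m` bits. Randomness refers to universal
computers, so a universal Chaitin computer has to be constructed (`LIL.univ_universal`): a partial
recursive function is made prefix-free by suppressing outputs on programs that clash with programs
which halted at an earlier stage.

*Probability.* Fix `c < 2 log 2` and a large integer `M`. Let `A K` say that the walk stays below
`√(c · log₂ k · Mᵏ)` at all the times `Mᵏ` with `k₁ ≤ k ≤ K`. The increments between the times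
`Mᵏ⁻¹` and `Mᵏ` are independent, and each is large enough with probability at least `1 / k`
(`LIL.le_pr_walk`, an exponential tilting estimate), while by Hoeffding's inequality the position at
time `Mᵏ⁻¹` spoils this with probability at most `4 / k²`. Hence the probability of `A K` tends
to `0` when first `k₁` and then `K` is taken large (`LIL.exists_pr_not_good_le`).

So a random sequence has `Sₙ > (1 - ε) φ(n)` for infinitely many `n` (`LIL.frequently_good`), and
the same test applied to the complemented sequence gives `Sₙ ≤ 0` for infinitely many `n`. The upper
half of the law of the iterated logarithm is not needed: as the steps are `±1`, the walk must cross
the level `(1 - ε) φ` upwards infinitely often, and just after a crossing `Sₙ / φ(n)` lies in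
`(1 - ε, 1 + ε)` because `φ → ∞` (`LIL.infinite_of_crossing`).
-/

open Filter

/-- `u` is a proper prefix of `v`. -/
def ProperPrefix (u v : List Bool) : Prop :=
  ∃ w : List Bool, w ≠ [] ∧ v = u ++ w

/-- A set of strings is prefix-free if no element is a proper prefix of another element. -/
def PrefixFreeSet (S : Set (List Bool)) : Prop :=
  ∀ u ∈ S, ∀ v ∈ S, ¬ ProperPrefix u v

/-- A Chaitin computer: a partial recursive function on binary strings whose
halting set (domain) is prefix-free. -/
structure ChaitinComputer where
  f : List Bool →. List Bool
  partrec : Partrec f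
  prefixFree : PrefixFreeSet {w : List Bool | (f w).Dom}

/-- A Chaitin computer `U` is universal if for every Chaitin computer `C` there is a
constant `c` such that every `w` in the domain of `C` is simulated: there is `y` with
`U y = C w` and `y.length ≤ w.length + c`. -/
def ChaitinComputer.Universal (U : ChaitinComputer) : Prop :=
  ∀ C : ChaitinComputer, ∃ c : ℕ, ∀ w : List Bool, (C.f w).Dom →
    ∃ y : List Bool, U.f y = C.f w ∧ y.length ≤ w.length + c

/-- The algorithmic information of a string `w` with respect to a universal Chaitin
computer `U`: the least length of a program `y` with `U y = w`, and `∞` if there is none. -/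
noncomputable def info (U : ChaitinComputer) (w : List Bool) : ℕ∞ :=
  ⨅ (y : List Bool) (_ : U.f y = Part.some w), (y.length : ℕ∞)

/-- The prefix of length `n` of a sequence `x : ℕ → Bool`, as a binary string. -/
def prefixOf (x : ℕ → Bool) (n : ℕ) : List Bool :=
  (List.range n).map x

/-- A sequence is Martin-Löf–Solovay–Chaitin random if for every universal Chaitin
computer `U` there is a constant `c > 0` with `I_U(x↾n) ≥ n − c` for all `n ≥ 1`. -/
def MLSCRandom (x : ℕ → Bool) : Prop :=
  ∀ U : ChaitinComputer, U.Universal →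
    ∃ c : ℕ, 0 < c ∧ ∀ n : ℕ, 1 ≤ n →
      (n : ℕ∞) ≤ info U (prefixOf x n) + (c : ℕ∞)

open Nat.Partrec (Code)
open Encodable (encode decode)

namespace LIL

/-! ### A universal Chaitin computer -/

/-- The unary tag of a program: the number of its leading `true`s. -/
def tag (z : List Bool) : ℕ := z.idxOf false

/-- What follows the tag `1ᵐ0` of a program. -/
def payload (z : List Bool) : List Bool := z.drop (tag z + 1)

lemma tag_mk (m : ℕ) (w : List Bool) : tag (List.replicate m true ++ false :: w) = m := by
  induction m with
  | zero => simp [tag]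
  | succ k ih =>
    simp only [tag] at ih ⊢
    rw [List.replicate_succ, List.cons_append, List.idxOf_cons_ne _ (by simp), ih]

lemma payload_mk (m : ℕ) (w : List Bool) :
    payload (List.replicate m true ++ false :: w) = w := by
  rw [payload, tag_mk, List.drop_append]
  simp

lemma tag_append {z : List Bool} (h : tag z < z.length) (w : List Bool) :
    tag (z ++ w) = tag z := by
  unfold tag at *
  exact List.idxOf_append_of_mem (List.idxOf_lt_length_iff.1 h)

lemma payload_append {z : List Bool} (h : tag z < z.length) (w : List Bool) :
    payload (z ++ w) = payload z ++ w := by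
  rw [payload, tag_append h, payload, List.drop_append_of_le_length (by omega)]

lemma primrec_tag : Primrec tag :=
  Primrec.list_idxOf.comp (Primrec.const false) Primrec.id

lemma primrec_payload : Primrec payload :=
  Primrec.list_drop.comp (Primrec.succ.comp primrec_tag) Primrec.id

/-- Two distinct strings one of which is a prefix of the other. -/
def Comparable (u w : List Bool) : Prop :=
  u ≠ w ∧ (w.take u.length = u ∨ u.take w.length = w)

instance : DecidableRel Comparable := fun u w => by unfold Comparable; infer_instance

lemma comparable_append {u w : List Bool} (hw : w ≠ []) : Comparable u (u ++ w) :=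
  ⟨by simpa using hw, Or.inl (by simp)⟩

lemma comparable_append' {u w : List Bool} (hw : w ≠ []) : Comparable (u ++ w) u :=
  ⟨by simpa using hw, Or.inr (by simp)⟩

lemma Comparable.properPrefix {u w : List Bool} (h : Comparable u w) :
    ProperPrefix u w ∨ ProperPrefix w u := by
  have key : ∀ a b : List Bool, a ≠ b → b.take a.length = a → ProperPrefix a b := by
    intro a b hab h
    refine ⟨b.drop a.length, ?_, ?_⟩
    · intro h0
      apply hab
      have := List.take_append_drop a.length b
      rw [h0, h] at this
      simpa using this
    · conv_lhs => rw [← List.take_append_drop a.length b, h]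
  rcases h with ⟨h1, h2 | h2⟩
  · exact Or.inl (key _ _ h1 h2)
  · exact Or.inr (key _ _ h1.symm h2)

lemma primrecRel_comparable : PrimrecRel Comparable := by
  have e : PrimrecRel (fun u w : List Bool => u = w) := Primrec.eq
  have h1 : PrimrecRel (fun u w : List Bool => w.take u.length = u) :=
    Primrec.eq.comp (Primrec.list_take.comp (Primrec.list_length.comp Primrec.fst) Primrec.snd)
      Primrec.fst
  have h2 : PrimrecRel (fun u w : List Bool => u.take w.length = w) :=
    Primrec.eq.comp (Primrec.list_take.comp (Primrec.list_length.comp Primrec.snd) Primrec.fst)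
      Primrec.snd
  exact PrimrecPred.and (PrimrecPred.not e) (PrimrecPred.or h1 h2)

/-- The run, for `T` steps, of the machine coded by the tag of `z` on the input `w`. -/
def run (T : ℕ) (z w : List Bool) : Option ℕ :=
  Code.evaln T (Denumerable.ofNat Code (tag z)) (encode w)

lemma primrec_run : Primrec (fun a : (ℕ × List Bool) × List Bool => run a.1.1 a.1.2 a.2) :=
  Code.primrec_evaln.comp <|
    ((Primrec.fst.comp Primrec.fst).pair
      ((Primrec.ofNat Code).comp (primrec_tag.comp (Primrec.snd.comp Primrec.fst)))).pair
      (Primrec.encode.comp Primrec.snd)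

/-- The string coded by `v` is comparable with the payload of `z`, and the machine coded by the
tag of `z` halts on it within `T` steps. -/
def Clash (v : ℕ) (zT : List Bool × ℕ) : Prop :=
  (((decode v : Option (List Bool)).bind fun u =>
    if Comparable u (payload zT.1) then run zT.2 zT.1 u else none).isSome : Bool) = true

instance : DecidableRel Clash := fun u w => by unfold Clash; infer_instance

lemma primrecRel_clash : PrimrecRel Clash := by
  unfold Clash
  have e : PrimrecPred fun b : Bool => b = true := Primrec.eq.comp Primrec.id (Primrec.const true)
  refine PrimrecPred.comp e (Primrec.option_isSome.comp ?_)
  apply Primrec.option_bind (Primrec.decode.comp Primrec.fst)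
  apply Primrec.ite
  · exact primrecRel_comparable.comp Primrec.snd
      (primrec_payload.comp (Primrec.fst.comp (Primrec.snd.comp Primrec.fst)))
  · exact primrec_run.comp
      (((Primrec.snd.comp (Primrec.snd.comp Primrec.fst)).pair
        (Primrec.fst.comp (Primrec.snd.comp Primrec.fst))).pair Primrec.snd)
  · exact Primrec.const none

/-- Stage `T` of the universal machine on the program `z = 1ᵐ0w`: the output of machine `m` on `w`
if it appears within `T` steps, provided no string comparable with `w` has halted by then. -/
def stage (z : List Bool) (T : ℕ) : Option (List Bool) :=
  if tag z < z.length ∧ ∀ v < T, ¬ Clash v (z, T) then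
    (run T z (payload z)).bind decode
  else none

lemma primrec_stage : Primrec₂ stage := by
  unfold stage
  apply Primrec.ite
  · apply PrimrecPred.and
    · exact Primrec.nat_lt.comp (primrec_tag.comp Primrec.fst)
        (Primrec.list_length.comp Primrec.fst)
    · have h : PrimrecRel (fun v zT => ¬ Clash v zT) := PrimrecPred.not primrecRel_clash
      exact (h.forall_mem_list.comp (Primrec.list_range.comp Primrec.snd) Primrec.id).of_eq
        fun a => by simp
  · apply Primrec.option_bind
    · exact primrec_run.comp ((Primrec.snd.pair Primrec.fst).pair (primrec_payload.comp Primrec.fst))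
    · exact Primrec.decode.comp Primrec.snd
  · exact Primrec.const none

lemma run_mono {T T' : ℕ} (h : T ≤ T') {z w : List Bool} {a : ℕ} (ha : run T z w = some a) :
    run T' z w = some a :=
  Code.evaln_mono h ha

lemma clash_of_run {T a : ℕ} {z u : List Bool} (h : Comparable u (payload z))
    (ha : run T z u = some a) : encode u < T ∧ Clash (encode u) (z, T) := by
  refine ⟨Code.evaln_bound ha, ?_⟩
  simp [Clash, h, ha]

lemma stage_some {z o : List Bool} {T : ℕ} (h : stage z T = some o) :
    tag z < z.length ∧ (∀ v < T, ¬ Clash v (z, T)) ∧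
      ∃ a, run T z (payload z) = some a ∧ decode a = some o := by
  unfold stage at h
  split_ifs at h with h1
  · exact ⟨h1.1, h1.2, by simpa [Option.bind_eq_some_iff] using h⟩

/-- A universal Chaitin computer: on `1ᵐ0w` it simulates machine number `m` on `w`, the halting
set of that machine being thinned out so as to be prefix-free. -/
def univ : ChaitinComputer where
  f z := Nat.rfindOpt (stage z)
  partrec := Partrec.rfindOpt primrec_stage.to_comp
  prefixFree := by
    rintro z hz z' hz' ⟨w, hw, rfl⟩
    obtain ⟨T, o, h⟩ := Nat.rfindOpt_dom.1 hz
    obtain ⟨T', o', h'⟩ := Nat.rfindOpt_dom.1 hz'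
    obtain ⟨h1, h2, a, h3, -⟩ := stage_some h
    obtain ⟨-, h2', a', h3', -⟩ := stage_some h'
    have ht := tag_append h1 w
    have hp := payload_append h1 w
    have hr : ∀ T u, run T (z ++ w) u = run T z u := by intro T u; simp [run, ht]
    rcases le_total T T' with hT | hT
    · have := run_mono hT h3
      rw [← hr] at this
      have hc := clash_of_run (z := z ++ w) (by rw [hp]; exact comparable_append hw) this
      exact h2' _ hc.1 hc.2
    · have := run_mono hT h3'
      rw [hr, hp] at this
      have hc := clash_of_run (comparable_append' hw) this
      exact h2 _ hc.1 hc.2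

theorem univ_universal : univ.Universal := by
  intro C
  obtain ⟨c, hc⟩ := Code.exists_code.1 C.partrec
  have hc' : ∀ w : List Bool, c.eval (encode w) = (C.f w).map encode := by
    intro w; rw [hc]; simp
  refine ⟨encode c + 1, fun w hw => ?_⟩
  set z := List.replicate (encode c) true ++ false :: w with hz
  have ht : tag z = encode c := tag_mk _ _
  have hp : payload z = w := payload_mk _ _
  have hlen : z.length = w.length + (encode c + 1) := by simp [hz]; omega
  have hrun : ∀ T u, run T z u = c.evaln T (encode u) := by
    intro T u; simp [run, ht]
  have hdom : ∀ T u a, run T z u = some a → (C.f u).Dom ∧ a ∈ (C.f u).map encode := by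
    intro T u a h
    rw [hrun] at h
    have := Code.evaln_sound h
    rw [hc'] at this
    exact ⟨this.1, this⟩
  have hno : ∀ T v, ¬ Clash v (z, T) := by
    intro T v h
    simp only [Clash, Option.isSome_iff_exists, Option.bind_eq_some_iff] at h
    obtain ⟨a, u, -, h⟩ := h
    split_ifs at h with h1
    have hu := (hdom _ _ _ h).1
    rw [hp] at h1
    rcases h1.properPrefix with h1 | h1
    · exact C.prefixFree _ hu _ hw h1
    · exact C.prefixFree _ hw _ hu h1
  refine ⟨z, ?_, hlen.le⟩
  have hev : encode ((C.f w).get hw) ∈ c.eval (encode w) := by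
    rw [hc']; exact Part.mem_map _ (Part.get_mem hw)
  obtain ⟨T, hT⟩ := Code.evaln_complete.1 hev
  have hst : stage z T = some ((C.f w).get hw) := by
    unfold stage
    rw [if_pos ⟨by omega, fun v _ => hno T v⟩, hp, hrun, hT]
    simp
  have hd : (univ.f z).Dom := Nat.rfindOpt_dom.2 ⟨T, _, hst⟩
  apply Part.ext'
  · exact ⟨fun _ => hw, fun _ => hd⟩
  · intro h1 h2
    obtain ⟨T', hT'⟩ := Nat.rfindOpt_spec (Part.get_mem h1)
    obtain ⟨-, -, a, ha, ha'⟩ := stage_some hT'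
    rw [hp] at ha
    have := (hdom _ _ _ ha).2
    simp only [Part.mem_map_iff] at this
    obtain ⟨b, hb, rfl⟩ := this
    rw [Encodable.encodek] at ha'
    exact (Part.mem_unique (Part.get_mem h2) (by simp at ha'; exact ha' ▸ hb)).symm

/-! ### Effective null tests -/

/-- All binary strings of length `n`. -/
def strs : ℕ → List (List Bool)
  | 0 => [[]]
  | n + 1 => (strs n).map (List.cons true) ++ (strs n).map (List.cons false)

lemma mem_strs {n : ℕ} {s : List Bool} : s ∈ strs n ↔ s.length = n := by
  induction n generalizing s with
  | zero => simp [strs]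
  | succ n ih =>
    cases s with
    | nil => simp [strs]
    | cons b s => cases b <;> simp [strs, ih]

lemma length_strs (n : ℕ) : (strs n).length = 2 ^ n := by
  induction n with
  | zero => simp [strs]
  | succ n ih => simp [strs, ih]; ring

lemma nodup_strs (n : ℕ) : (strs n).Nodup := by
  induction n with
  | zero => simp [strs]
  | succ n ih =>
    refine List.Nodup.append (ih.map (List.cons_injective)) (ih.map (List.cons_injective)) ?_
    intro a ha hb
    simp only [List.mem_map] at ha hb
    obtain ⟨u, -, rfl⟩ := ha
    obtain ⟨v, -, hv⟩ := hb
    simp at hv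

lemma primrec_strs : Primrec strs := by
  have h : Primrec (Nat.rec (motive := fun _ => List (List Bool)) [[]] fun (_ : ℕ) L =>
      L.map (List.cons true) ++ L.map (List.cons false)) := by
    apply Primrec.nat_rec₁
    have hc : ∀ b : Bool, Primrec₂ (fun (_ : ℕ × List (List Bool)) (u : List Bool) => b :: u) :=
      fun b => Primrec.list_cons.comp (Primrec.const b) Primrec.snd
    exact Primrec.list_append.comp (Primrec.list_map Primrec.snd (hc true))
      (Primrec.list_map Primrec.snd (hc false))
  refine h.of_eq fun n => ?_
  induction n with
  | zero => rfl
  | succ n ih => simp only [strs, ih]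

section Kurtz

variable (N : ℕ → ℕ) (A : ℕ → List Bool → Prop) [DecidableRel A]

/-- The strings of length `N K` that satisfy `A K`. -/
def hits (K : ℕ) : List (List Bool) := (strs (N K)).filter fun s => A K s

variable {N A}

lemma primrec_hits (hN : Primrec N) (hA : PrimrecRel A) : Primrec (hits N A) := by
  have hA' : PrimrecRel (fun s K => A K s) := hA.comp Primrec.snd Primrec.fst
  exact hA'.listFilter.comp (primrec_strs.comp hN) Primrec.id

/-- The decoder: given `z = 1ᵐ0w` and `K` with `|w| + 2m = N K`, the string in `hits N A K` whose
position is the position of `w` among the strings of its own length. -/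
def decoder (N : ℕ → ℕ) (A : ℕ → List Bool → Prop) [DecidableRel A] (z : List Bool) (K : ℕ) :
    Option (List Bool) :=
  if tag z < z.length ∧ z.length + tag z = N K + 1 then
    (hits N A K)[(strs (payload z).length).idxOf (payload z)]?
  else none

lemma primrec_decoder (hN : Primrec N) (hA : PrimrecRel A) : Primrec₂ (decoder N A) := by
  unfold decoder
  apply Primrec.ite
  · apply PrimrecPred.and
    · exact Primrec.nat_lt.comp (primrec_tag.comp Primrec.fst)
        (Primrec.list_length.comp Primrec.fst)
    · exact Primrec.eq.comp
        (Primrec.nat_add.comp (Primrec.list_length.comp Primrec.fst)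
          (primrec_tag.comp Primrec.fst))
        (Primrec.succ.comp (hN.comp Primrec.snd))
  · have hp := primrec_payload.comp (Primrec.fst (α := List Bool) (β := ℕ))
    have hq := Primrec.list_idxOf.comp hp (primrec_strs.comp (Primrec.list_length.comp hp))
    -- `Primrec.list_idxOf` and `decoder` use different (equal) `BEq` instances on `List Bool`.
    rw [show (instBEqOfDecidableEq : BEq (List Bool)) = List.instBEq from
      lawful_beq_subsingleton _ _] at hq
    exact Primrec.list_getElem?.comp ((primrec_hits hN hA).comp Primrec.snd) hq
  · exact Primrec.const none

/-- A random sequence avoids every effectively given null set: if `A K` is a decidable set of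
strings of length `N K` whose probability is arbitrarily small for suitable `K`, then some `A K`
misses the corresponding prefix of `x`. For each `m` one can search for `K` such that `A K` has
probability at most `4⁻ᵐ`; an element of it is then described by `1ᵐ0` followed by its index in
`A K`, which has `N K - 2m` bits, so that `m - 1` bits are saved. -/
theorem exists_not_of_random {x : ℕ → Bool} (hx : MLSCRandom x) (hN : Primrec N)
    (hA : PrimrecRel A) (hs : ∀ m, ∃ K, (hits N A K).length * 4 ^ m ≤ 2 ^ N K) :
    ∃ K, ¬ A K (prefixOf x (N K)) := by
  by_contra! hall
  set κ : ℕ → ℕ := fun m => Nat.find (hs m) with hκ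
  have hpow : ∀ b : ℕ, Primrec (fun n : ℕ => b ^ n) := fun b =>
    (Primrec₂.unpaired'.1 Nat.Primrec.pow).comp (Primrec.const b) Primrec.id
  have hκc : Computable κ := by
    have hp : PrimrecRel (fun m K : ℕ => (hits N A K).length * 4 ^ m ≤ 2 ^ N K) :=
      Primrec.nat_le.comp
        (Primrec.nat_mul.comp
          (Primrec.list_length.comp ((primrec_hits hN hA).comp Primrec.snd))
          ((hpow 4).comp Primrec.fst))
        ((hpow 2).comp (hN.comp Primrec.snd))
    have hd : Primrec₂ (fun m K : ℕ => decide ((hits N A K).length * 4 ^ m ≤ 2 ^ N K)) :=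
      primrecRel_iff_primrec_decide.1 hp
    refine (Partrec.rfind hd.to_comp.partrec₂).of_eq_tot fun m => ?_
    rw [Nat.mem_rfind]
    refine ⟨by simpa using Nat.find_spec (hs m), fun {k} hk => ?_⟩
    have := Nat.find_min (hs m) hk
    simpa using this
  have hκs : ∀ m, (hits N A (κ m)).length * 4 ^ m ≤ 2 ^ N (κ m) := fun m => Nat.find_spec (hs m)
  let C : ChaitinComputer :=
    { f := fun z => (decoder N A z (κ (tag z)) : Part (List Bool))
      partrec := Computable.ofOption <|
        (primrec_decoder hN hA).to_comp.comp Computable.id (hκc.comp primrec_tag.to_comp)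
      prefixFree := by
        have key : ∀ z, (decoder N A z (κ (tag z)) : Part (List Bool)).Dom →
            tag z < z.length ∧ z.length + tag z = N (κ (tag z)) + 1 := by
          intro z hz
          by_contra hcon
          rw [decoder, if_neg hcon] at hz
          exact hz
        rintro z hz z' hz' ⟨w, hw, rfl⟩
        obtain ⟨h1, h2⟩ := key _ hz
        obtain ⟨-, h4⟩ := key _ hz'
        rw [tag_append h1] at h4
        have : 0 < w.length := List.length_pos_iff.2 hw
        rw [List.length_append] at h4
        omega }
  obtain ⟨c, hc⟩ := univ_universal C
  obtain ⟨c', -, hc'⟩ := hx univ univ_universal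
  have main : ∀ m, 1 ≤ m → m ≤ c + c' + 1 := by
    intro m hm
    set n := N (κ m) with hn
    have hmem : prefixOf x n ∈ hits N A (κ m) := by
      simp only [hits, List.mem_filter, mem_strs, decide_eq_true_eq]
      exact ⟨by simp [prefixOf, hn], hall _⟩
    obtain ⟨i, hi, hxi⟩ := List.getElem_of_mem hmem
    have hcount := hκs m
    rw [← hn, show (4 : ℕ) = 2 ^ 2 by norm_num, ← pow_mul] at hcount
    have h2m : 2 * m ≤ n := by
      have h1 : 1 * 2 ^ (2 * m) ≤ 2 ^ n :=
        le_trans (Nat.mul_le_mul_right _ (by omega)) hcount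
      rw [one_mul] at h1
      exact (Nat.pow_le_pow_iff_right (by norm_num)).1 h1
    have hi2 : i < (strs (n - 2 * m)).length := by
      rw [length_strs]
      have h1 : 2 ^ n = 2 ^ (n - 2 * m) * 2 ^ (2 * m) := by
        rw [← pow_add]; congr 1; omega
      rw [h1] at hcount
      have := Nat.le_of_mul_le_mul_right hcount (by positivity)
      omega
    set w := (strs (n - 2 * m))[i] with hw
    have hwl : w.length = n - 2 * m := mem_strs.1 (List.getElem_mem hi2)
    set z := List.replicate m true ++ false :: w with hz
    have ht : tag z = m := tag_mk _ _
    have hp : payload z = w := payload_mk _ _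
    have hl : z.length = n - m + 1 := by simp [hz, hwl]; omega
    have hdec : decoder N A z (κ (tag z)) = some (prefixOf x n) := by
      rw [decoder, if_pos ⟨by omega, by rw [ht, ← hn]; omega⟩, ht, hp, hwl, hw,
        (nodup_strs _).idxOf_getElem, List.getElem?_eq_getElem hi, hxi]
    have hCz : C.f z = Part.some (prefixOf x n) := by
      change (decoder N A z (κ (tag z)) : Part (List Bool)) = _
      rw [hdec]; rfl
    obtain ⟨y, hy, hyl⟩ := hc z (by rw [hCz]; trivial)
    have hinfo : info univ (prefixOf x n) ≤ y.length :=
      iInf₂_le y (by rw [hy, hCz])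
    have h := (hc' n (by omega)).trans (add_le_add_left hinfo _)
    have h : n ≤ y.length + c' := by exact_mod_cast h
    omega
  have := main (c + c' + 2) (by omega)
  omega

end Kurtz

/-! ### Random strings and tail bounds for the walk -/

section Probability

/-- The expectation of `f` over uniformly random strings of length `n`. -/
noncomputable def avg : ℕ → (List Bool → ℝ) → ℝ
  | 0, f => f []
  | n + 1, f => (avg n (fun s => f (true :: s)) + avg n (fun s => f (false :: s))) / 2

lemma avg_add (n : ℕ) (f g : List Bool → ℝ) :
    avg n (fun s => f s + g s) = avg n f + avg n g := by
  induction n generalizing f g with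
  | zero => rfl
  | succ n ih => simp only [avg, ih]; ring

lemma avg_mul (n : ℕ) (a : ℝ) (f : List Bool → ℝ) : avg n (fun s => a * f s) = a * avg n f := by
  induction n generalizing f with
  | zero => rfl
  | succ n ih => simp only [avg, ih]; ring

lemma avg_const (n : ℕ) (a : ℝ) : avg n (fun _ => a) = a := by
  induction n with
  | zero => rfl
  | succ n ih => simp only [avg, ih]; ring

lemma avg_mono {n : ℕ} {f g : List Bool → ℝ} (h : ∀ s, s.length = n → f s ≤ g s) :
    avg n f ≤ avg n g := by
  induction n generalizing f g with
  | zero => exact h [] rfl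
  | succ n ih =>
    simp only [avg]
    have h1 := ih (f := fun s => f (true :: s)) (g := fun s => g (true :: s))
      fun s hs => h _ (by simp [hs])
    have h2 := ih (f := fun s => f (false :: s)) (g := fun s => g (false :: s))
      fun s hs => h _ (by simp [hs])
    linarith

lemma avg_congr {n : ℕ} {f g : List Bool → ℝ} (h : ∀ s, s.length = n → f s = g s) :
    avg n f = avg n g :=
  le_antisymm (avg_mono fun s hs => (h s hs).le) (avg_mono fun s hs => (h s hs).ge)

lemma avg_append (n m : ℕ) (f : List Bool → ℝ) :
    avg (n + m) f = avg n fun u => avg m fun w => f (u ++ w) := by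
  induction n generalizing f with
  | zero => simp [avg]
  | succ n ih => rw [Nat.succ_add]; simp only [avg, ih, List.cons_append]

lemma avg_map_not (n : ℕ) (f : List Bool → ℝ) : avg n (fun s => f (s.map not)) = avg n f := by
  induction n generalizing f with
  | zero => rfl
  | succ n ih =>
    simp only [avg, List.map_cons, Bool.not_true, Bool.not_false]
    rw [ih (fun s => f (false :: s)), ih (fun s => f (true :: s)), add_comm]

open Classical in
/-- The probability that a uniformly random string of length `n` satisfies `P`. -/
noncomputable def pr (n : ℕ) (P : List Bool → Prop) : ℝ :=
  avg n fun s => if P s then 1 else 0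

lemma pr_mono {n : ℕ} {P Q : List Bool → Prop} (h : ∀ s, s.length = n → P s → Q s) :
    pr n P ≤ pr n Q := by
  refine avg_mono fun s hs => ?_
  by_cases hP : P s
  · simp [hP, h s hs hP]
  · simp only [hP, if_false]; split_ifs <;> norm_num

lemma pr_congr {n : ℕ} {P Q : List Bool → Prop} (h : ∀ s, s.length = n → (P s ↔ Q s)) :
    pr n P = pr n Q :=
  le_antisymm (pr_mono fun s hs => (h s hs).1) (pr_mono fun s hs => (h s hs).2)

lemma pr_le_one (n : ℕ) (P : List Bool → Prop) : pr n P ≤ 1 := by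
  rw [← avg_const n 1]
  exact avg_mono fun s _ => by split_ifs <;> norm_num

lemma pr_nonneg (n : ℕ) (P : List Bool → Prop) : 0 ≤ pr n P := by
  rw [← avg_const n 0]
  exact avg_mono fun s _ => by split_ifs <;> norm_num

lemma pr_or_le (n : ℕ) (P Q : List Bool → Prop) :
    pr n (fun s => P s ∨ Q s) ≤ pr n P + pr n Q := by
  unfold pr
  rw [← avg_add]
  refine avg_mono fun s _ => ?_
  by_cases hP : P s <;> by_cases hQ : Q s <;> simp [hP, hQ]

lemma pr_not (n : ℕ) (P : List Bool → Prop) : pr n (fun s => ¬ P s) = 1 - pr n P := by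
  have h : pr n (fun s => ¬ P s) + pr n P = 1 := by
    unfold pr
    rw [← avg_add, ← avg_const n 1]
    refine avg_congr fun s _ => ?_
    by_cases hP : P s <;> simp [hP, avg_const]
  linarith

/-- Disjoint segments of a random string are independent. -/
lemma pr_append (n m : ℕ) (P Q : List Bool → Prop) :
    pr (n + m) (fun s => P (s.take n) ∧ Q (s.drop n)) = pr n P * pr m Q := by
  unfold pr
  rw [avg_append, mul_comm, ← avg_mul]
  refine avg_congr fun u hu => ?_
  subst hu
  by_cases hP : P u
  · simp only [hP, if_true, mul_one]
    refine avg_congr fun w _ => ?_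
    have h : P ((u ++ w).take u.length) ∧ Q ((u ++ w).drop u.length) ↔ Q w := by
      rw [List.take_left, List.drop_left]
      simp [hP]
    by_cases hQ : Q w
    · rw [if_pos (h.2 hQ), if_pos hQ]
    · rw [if_neg fun h' => hQ (h.1 h'), if_neg hQ]
  · simp [hP, avg_const]

lemma pr_take (n m : ℕ) (P : List Bool → Prop) :
    pr (n + m) (fun s => P (s.take n)) = pr n P := by
  have h := pr_append n m P fun _ => True
  have h1 : pr m (fun _ => True) = 1 := by simp [pr, avg_const]
  simpa [h1] using h

lemma pr_map_not (n : ℕ) (P : List Bool → Prop) : pr n (fun s => P (s.map not)) = pr n P := by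
  classical
  exact avg_map_not n fun s => if P s then 1 else 0

lemma length_filter_strs (n : ℕ) (P : List Bool → Prop) [DecidablePred P] :
    (((strs n).filter fun s => P s).length : ℝ) = 2 ^ n * pr n P := by
  induction n generalizing P with
  | zero => by_cases h : P [] <;> simp [strs, pr, avg, h]
  | succ n ih =>
    have h1 := ih fun s => P (true :: s)
    have h2 := ih fun s => P (false :: s)
    have h3 : pr (n + 1) P =
        (pr n (fun s => P (true :: s)) + pr n (fun s => P (false :: s))) / 2 := rfl
    simp only [strs, List.filter_append, List.length_append, List.filter_map, List.length_map,
      Nat.cast_add]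
    rw [h3]
    simp only [Function.comp_def]
    rw [h1, h2]
    ring

/-- The position of the simple random walk after the steps recorded by a string. -/
def walk (s : List Bool) : ℤ := (s.map fun b => if b then (1 : ℤ) else -1).sum

lemma walk_append (u w : List Bool) : walk (u ++ w) = walk u + walk w := by simp [walk]

lemma avg_exp_walk (n : ℕ) (t : ℝ) : avg n (fun s => Real.exp (t * walk s)) = Real.cosh t ^ n := by
  induction n with
  | zero => simp [avg, walk]
  | succ n ih =>
    have h : ∀ (b : Bool) (s : List Bool), Real.exp (t * walk (b :: s)) =
        Real.exp (t * (if b then 1 else -1)) * Real.exp (t * walk s) := by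
      intro b s
      rw [← Real.exp_add]
      cases b <;> simp [walk] <;> ring
    simp only [avg, h, avg_mul, ih]
    rw [Real.cosh_eq]
    simp
    ring

/-- Hoeffding's inequality for the simple random walk. -/
lemma pr_walk_lt_le {n : ℕ} (hn : 0 < n) {t : ℝ} (ht : 0 ≤ t) :
    pr n (fun s => (walk s : ℝ) < -t) ≤ Real.exp (-(t ^ 2 / (2 * n))) := by
  have hn' : (0 : ℝ) < n := by exact_mod_cast hn
  set a := t / n with ha
  have ha0 : 0 ≤ a := by positivity
  calc pr n (fun s => (walk s : ℝ) < -t)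
      ≤ avg n (fun s => Real.exp (-(a * t)) * Real.exp (-a * walk s)) := by
        refine avg_mono fun s _ => ?_
        split_ifs with h
        · rw [← Real.exp_add]
          apply Real.one_le_exp
          nlinarith
        · positivity
    _ = Real.exp (-(a * t)) * Real.cosh a ^ n := by rw [avg_mul, avg_exp_walk, Real.cosh_neg]
    _ ≤ Real.exp (-(a * t)) * Real.exp (a ^ 2 / 2) ^ n := by
        gcongr
        exact Real.cosh_le_exp_half_sq a
    _ = Real.exp (-(t ^ 2 / (2 * n))) := by
        rw [← Real.exp_nat_mul, ← Real.exp_add]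
        congr 1
        rw [ha]
        field_simp
        ring

lemma exp_le_cosh (t : ℝ) : Real.exp (t ^ 2 / 2 - t ^ 4 / 4) ≤ Real.cosh t := by
  have h1 : 1 + t ^ 2 / 2 ≤ Real.cosh t := by
    have e : Real.cosh t = 1 + 2 * Real.sinh (t / 2) ^ 2 := by
      have h := Real.cosh_two_mul (t / 2)
      rw [Real.cosh_sq, mul_div_cancel₀ t two_ne_zero] at h
      rw [h]; ring
    have hs : |t / 2| ≤ |Real.sinh (t / 2)| := by
      rw [Real.abs_sinh]
      exact Real.self_le_sinh_iff.2 (abs_nonneg _)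
    have := sq_le_sq.2 hs
    rw [e]
    nlinarith
  refine le_trans ?_ h1
  set u := t ^ 2 / 2 with hu
  have hu0 : 0 ≤ u := by positivity
  have h2 : t ^ 4 / 4 = u ^ 2 := by rw [hu]; ring
  rw [h2]
  -- `1 / (1 + u) = 1 - u / (1 + u) ≤ exp (-u / (1 + u)) ≤ exp (-(u - u²))`
  have h3 : 1 - u / (1 + u) = (1 + u)⁻¹ := by field_simp; ring
  have h4 := Real.one_sub_le_exp_neg (u / (1 + u))
  rw [h3] at h4
  have h5 : u - u ^ 2 ≤ u / (1 + u) := by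
    rw [le_div_iff₀ (by positivity)]
    nlinarith [pow_nonneg hu0 3]
  have h6 : (1 + u)⁻¹ ≤ Real.exp (-(u - u ^ 2)) :=
    h4.trans (Real.exp_le_exp.2 (by linarith))
  rw [Real.exp_neg] at h6
  exact (inv_le_inv₀ (by positivity) (Real.exp_pos _)).1 h6

/-- A lower bound for the upper tail of the random walk, valid in the moderate deviations range.
The exponential tilt by `exp (t S)` with `t = (y + 2) / √n` moves the walk to about `(y + 2) √n`;
under the tilt, the parts below `y √n` and above `(y + 4) √n` carry a fraction of about `e⁻²`
of the mass each, at most. -/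
lemma le_pr_walk {n : ℕ} (hn : 0 < n) {y : ℝ} (hy : 0 ≤ y) (hny : 2 * (y + 2) ^ 4 ≤ n) :
    Real.exp (-(y ^ 2 / 2 + 4 * y + 6)) / 2 ≤ pr n (fun s => y * √n ≤ (walk s : ℝ)) := by
  have hn' : (0 : ℝ) < n := by exact_mod_cast hn
  set r := √(n : ℝ) with hr
  have hr0 : 0 < r := Real.sqrt_pos.2 hn'
  have hr2 : r ^ 2 = n := Real.sq_sqrt hn'.le
  set t := (y + 2) / r with ht
  have htr : t * r = y + 2 := by rw [ht]; field_simp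
  set θ := 2 / r with hθ
  have hθ0 : 0 < θ := by positivity
  have ht0 : 0 < t := by positivity
  have hθr : θ * r = 2 := by rw [hθ]; field_simp
  have hpt : ∀ s : List Bool,
      Real.exp (-(t * (y + 4) * r)) * (Real.exp (t * walk s)
        + ((-Real.exp (θ * y * r)) * Real.exp ((t - θ) * walk s)
        + (-Real.exp (-(θ * (y + 4) * r))) * Real.exp ((t + θ) * walk s)))
      ≤ open Classical in if y * r ≤ (walk s : ℝ) then (1 : ℝ) else 0 := by
    intro s
    set S : ℝ := (walk s : ℝ)
    have e1 : Real.exp (θ * y * r) * Real.exp ((t - θ) * S)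
        = Real.exp (t * S) * Real.exp (θ * (y * r - S)) := by
      rw [← Real.exp_add, ← Real.exp_add]; congr 1; ring
    have e2 : Real.exp (-(θ * (y + 4) * r)) * Real.exp ((t + θ) * S)
        = Real.exp (t * S) * Real.exp (θ * (S - (y + 4) * r)) := by
      rw [← Real.exp_add, ← Real.exp_add]; congr 1; ring
    have e3 : Real.exp (-(t * (y + 4) * r)) * (Real.exp (t * S)
        + ((-Real.exp (θ * y * r)) * Real.exp ((t - θ) * S)
        + (-Real.exp (-(θ * (y + 4) * r))) * Real.exp ((t + θ) * S)))
        = Real.exp (t * (S - (y + 4) * r)) *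
          (1 - Real.exp (θ * (y * r - S)) - Real.exp (θ * (S - (y + 4) * r))) := by
      have e4 : Real.exp (t * (S - (y + 4) * r)) =
          Real.exp (-(t * (y + 4) * r)) * Real.exp (t * S) := by
        rw [← Real.exp_add]; congr 1; ring
      rw [e4, neg_mul, neg_mul, e1, e2]; ring
    rw [e3]
    have p1 := Real.exp_pos (θ * (y * r - S))
    have p2 := Real.exp_pos (θ * (S - (y + 4) * r))
    have p3 := Real.exp_pos (t * (S - (y + 4) * r))
    rcases le_or_gt S ((y + 4) * r) with h1 | h1
    · have q : Real.exp (t * (S - (y + 4) * r)) ≤ 1 := Real.exp_le_one_iff.2 (by nlinarith)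
      split_ifs with h2
      · nlinarith
      · have : 1 ≤ Real.exp (θ * (y * r - S)) := Real.one_le_exp (by push Not at h2; nlinarith)
        nlinarith
    · have : 1 ≤ Real.exp (θ * (S - (y + 4) * r)) := Real.one_le_exp (by nlinarith)
      have : 0 ≤ (open Classical in if y * r ≤ S then (1 : ℝ) else 0) := by
        split_ifs <;> norm_num
      nlinarith
  have hav := avg_mono (n := n) fun s _ => hpt s
  rw [avg_mul, avg_add, avg_add, avg_mul, avg_mul, avg_exp_walk, avg_exp_walk, avg_exp_walk] at hav
  refine le_trans ?_ hav
  have up : ∀ v : ℝ, Real.cosh (v / r) ^ n ≤ Real.exp (v ^ 2 / 2) := by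
    intro v
    calc Real.cosh (v / r) ^ n ≤ Real.exp ((v / r) ^ 2 / 2) ^ n := by
          gcongr
          exact Real.cosh_le_exp_half_sq _
      _ = Real.exp (v ^ 2 / 2) := by
          rw [← Real.exp_nat_mul]; congr 1; rw [← hr2]; field_simp
  have lo : Real.exp ((y + 2) ^ 2 / 2 - 1 / 8) ≤ Real.cosh t ^ n := by
    calc Real.exp ((y + 2) ^ 2 / 2 - 1 / 8)
        ≤ Real.exp (t ^ 2 / 2 - t ^ 4 / 4) ^ n := by
          rw [← Real.exp_nat_mul]
          apply Real.exp_le_exp.2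
          have e1 : (n : ℝ) * (t ^ 2 / 2 - t ^ 4 / 4) =
              (y + 2) ^ 2 / 2 - (y + 2) ^ 4 / (4 * n) := by
            rw [ht, ← hr2]; field_simp
          rw [e1]
          have : (y + 2) ^ 4 / (4 * n) ≤ 1 / 8 := by
            rw [div_le_iff₀ (by positivity)]; linarith
          linarith
      _ ≤ Real.cosh t ^ n := by
          gcongr
          exact exp_le_cosh t
  have d1 : t - θ = y / r := by rw [ht, hθ]; ring
  have d2 : t + θ = (y + 4) / r := by rw [ht, hθ]; ring
  have b1 : Real.exp (θ * y * r) * Real.cosh (t - θ) ^ n ≤ Real.exp ((y + 2) ^ 2 / 2 - 2) := by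
    rw [d1]
    calc _ ≤ Real.exp (θ * y * r) * Real.exp (y ^ 2 / 2) := by gcongr; exact up y
      _ = _ := by rw [← Real.exp_add]; congr 1; linear_combination y * hθr
  have b2 : Real.exp (-(θ * (y + 4) * r)) * Real.cosh (t + θ) ^ n
      ≤ Real.exp ((y + 2) ^ 2 / 2 - 2) := by
    rw [d2]
    calc _ ≤ Real.exp (-(θ * (y + 4) * r)) * Real.exp ((y + 4) ^ 2 / 2) := by
          gcongr; exact up (y + 4)
      _ = _ := by rw [← Real.exp_add]; congr 1; linear_combination (-(y + 4)) * hθr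
  have num : Real.exp ((y + 2) ^ 2 / 2) / 2 ≤
      Real.exp ((y + 2) ^ 2 / 2 - 1 / 8) - 2 * Real.exp ((y + 2) ^ 2 / 2 - 2) := by
    rw [show (y + 2) ^ 2 / 2 - 1 / 8 = (y + 2) ^ 2 / 2 + -(1 / 8) by ring,
      show (y + 2) ^ 2 / 2 - 2 = (y + 2) ^ 2 / 2 + -2 by ring, Real.exp_add, Real.exp_add]
    have h1 : (7 / 8 : ℝ) ≤ Real.exp (-(1 / 8)) := by
      have := Real.one_sub_le_exp_neg (1 / 8); linarith
    have h2 : Real.exp (-2) ≤ 3 / 16 := by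
      have h3 := Real.exp_one_gt_d9
      have h4 : Real.exp 2 = Real.exp 1 ^ 2 := by rw [← Real.exp_nat_mul]; norm_num
      rw [Real.exp_neg, inv_le_comm₀ (Real.exp_pos _) (by norm_num), h4]
      nlinarith
    have := Real.exp_pos ((y + 2) ^ 2 / 2)
    nlinarith
  calc Real.exp (-(y ^ 2 / 2 + 4 * y + 6)) / 2
      = Real.exp (-(t * (y + 4) * r)) * (Real.exp ((y + 2) ^ 2 / 2) / 2) := by
        rw [← mul_div_assoc, ← Real.exp_add]
        congr 2
        linear_combination (y + 4) * htr
    _ ≤ _ := by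
        gcongr
        linarith

end Probability

/-! ### Independent blocks -/

section Blocks

/-- The walk is at least `√(c · log₂ k · Mᵏ)` at time `Mᵏ`. -/
def Good (M : ℕ) (c : ℝ) (k : ℕ) (s : List Bool) : Prop :=
  √(c * Nat.log 2 k * M ^ k) ≤ walk (s.take (M ^ k))

/-- The walk gains at least `√(c · log₂ k · Mᵏ)` between the times `Mᵏ⁻¹` and `Mᵏ`. -/
def Jump (M : ℕ) (c : ℝ) (k : ℕ) (s : List Bool) : Prop :=
  √(c * Nat.log 2 k * M ^ k) ≤ walk ((s.take (M ^ k)).drop (M ^ (k - 1)))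

/-- The walk is below `-√(d · log₂ k · Mᵏ)` at time `Mᵏ⁻¹`. -/
def Past (M : ℕ) (d : ℝ) (k : ℕ) (s : List Bool) : Prop :=
  (walk (s.take (M ^ (k - 1))) : ℝ) < -√(d * Nat.log 2 k * M ^ k)

lemma good_of_jump {M : ℕ} (hM : 2 ≤ M) {c c' d : ℝ} (hc' : 0 ≤ c') (hd : 0 ≤ d)
    (hc : 0 ≤ c) (h : √c = √c' + √d) {k : ℕ} {s : List Bool} (hj : Jump M c k s)
    (hp : ¬ Past M d k s) : Good M c' k s := by
  unfold Good; unfold Jump at hj; unfold Past at hp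
  push Not at hp
  have e : walk (s.take (M ^ k)) =
      walk (s.take (M ^ (k - 1))) + walk ((s.take (M ^ k)).drop (M ^ (k - 1))) := by
    rw [← walk_append]
    congr 1
    have h1 : s.take (M ^ (k - 1)) = (s.take (M ^ k)).take (M ^ (k - 1)) := by
      rw [List.take_take, min_eq_left (Nat.pow_le_pow_right (by omega) (by omega))]
    rw [h1, List.take_append_drop]
  rw [e]
  rw [mul_assoc, Real.sqrt_mul hc] at hj
  rw [mul_assoc, Real.sqrt_mul hd] at hp
  rw [mul_assoc, Real.sqrt_mul hc']
  rw [h] at hj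
  push_cast
  linarith

lemma pr_past_le {M : ℕ} (hM : 2 ≤ M) {d : ℝ} (hd : 0 ≤ d) (hMd : 4 * Real.log 2 ≤ M * d)
    {k K : ℕ} (hk : 1 ≤ k) (hK : k ≤ K) : pr (M ^ K) (Past M d k) ≤ 4 / (k : ℝ) ^ 2 := by
  obtain ⟨j, rfl⟩ : ∃ j, k = j + 1 := ⟨k - 1, by omega⟩
  obtain ⟨r, hr⟩ : ∃ r, M ^ K = M ^ j + r :=
    Nat.exists_eq_add_of_le (Nat.pow_le_pow_right (by omega) (by omega))
  have hMj : 0 < M ^ j := by positivity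
  have hMj' : (0 : ℝ) < (M : ℝ) ^ j := by positivity
  set l := Nat.log 2 (j + 1) with hl
  unfold Past
  simp only [Nat.add_sub_cancel]
  rw [hr, pr_take (M ^ j) r fun u => (walk u : ℝ) < -√(d * l * M ^ (j + 1))]
  refine (pr_walk_lt_le hMj (Real.sqrt_nonneg _)).trans ?_
  rw [Real.sq_sqrt (by positivity)]
  have h1 : d * l * (M : ℝ) ^ (j + 1) / (2 * ((M ^ j : ℕ) : ℝ)) = M * d * l / 2 := by
    push_cast; field_simp; ring
  rw [h1]
  have h2 : ((j + 1 : ℕ) : ℝ) ≤ 2 ^ (l + 1) := by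
    exact_mod_cast (Nat.lt_pow_succ_log_self (by norm_num) (j + 1)).le
  calc Real.exp (-(M * d * l / 2)) ≤ Real.exp (-(2 * l * Real.log 2)) := by
        apply Real.exp_le_exp.2
        have : (0 : ℝ) ≤ l := by positivity
        nlinarith
    _ = 4 / (2 ^ (l + 1)) ^ 2 := by
        rw [show 2 * (l : ℝ) * Real.log 2 = ((2 * l : ℕ) : ℝ) * Real.log 2 by push_cast; ring,
          Real.exp_neg, Real.exp_nat_mul, Real.exp_log (by norm_num)]
        field_simp
        ring
    _ ≤ 4 / ((j + 1 : ℕ) : ℝ) ^ 2 := by gcongr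

lemma pr_exists_past_le {M : ℕ} (hM : 2 ≤ M) {d : ℝ} (hd : 0 ≤ d)
    (hMd : 4 * Real.log 2 ≤ M * d) {k₁ K : ℕ} (hk : 1 ≤ k₁) (hK : k₁ ≤ K) :
    pr (M ^ K) (fun s => ∃ k, k₁ < k ∧ k ≤ K ∧ Past M d k s) ≤ 4 / k₁ - 4 / K := by
  induction K, hK using Nat.le_induction with
  | base =>
    rw [sub_self]
    refine le_of_eq ?_
    rw [← avg_const (M ^ k₁) 0]
    refine avg_congr fun s _ => if_neg ?_
    rintro ⟨k, h1, h2, -⟩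
    omega
  | succ K hK ih =>
    obtain ⟨r, hr⟩ : ∃ r, M ^ (K + 1) = M ^ K + r :=
      Nat.exists_eq_add_of_le (Nat.pow_le_pow_right (by omega) (by omega))
    have h1 : pr (M ^ (K + 1)) (fun s => ∃ k, k₁ < k ∧ k ≤ K + 1 ∧ Past M d k s) ≤
        pr (M ^ (K + 1)) (fun s => (∃ k, k₁ < k ∧ k ≤ K ∧ Past M d k s) ∨ Past M d (K + 1) s) := by
      refine pr_mono fun s _ => ?_
      rintro ⟨k, h1, h2, h3⟩
      rcases Nat.lt_or_ge K k with h | h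
      · obtain rfl : k = K + 1 := by omega
        exact Or.inr h3
      · exact Or.inl ⟨k, h1, h, h3⟩
    have h2 : pr (M ^ (K + 1)) (fun s => ∃ k, k₁ < k ∧ k ≤ K ∧ Past M d k s) =
        pr (M ^ K) (fun s => ∃ k, k₁ < k ∧ k ≤ K ∧ Past M d k s) := by
      rw [hr, ← pr_take (M ^ K) r]
      refine pr_congr fun s _ => exists_congr fun k => and_congr_right fun _ =>
        and_congr_right fun hk => ?_
      unfold Past
      rw [List.take_take, min_eq_left (Nat.pow_le_pow_right (by omega) (by omega))]
    have h3 := pr_past_le hM hd hMd (k := K + 1) (by omega) le_rfl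
    have h4 : (4 : ℝ) / ((K + 1 : ℕ) : ℝ) ^ 2 ≤ 4 / K - 4 / (K + 1 : ℕ) := by
      have : (0 : ℝ) < K := by exact_mod_cast (by omega : 0 < K)
      push_cast
      rw [div_sub_div _ _ (by positivity) (by positivity), div_le_div_iff₀ (by positivity)
        (by positivity)]
      nlinarith [mul_pos this this]
    have h5 := pr_or_le (M ^ (K + 1)) (fun s => ∃ k, k₁ < k ∧ k ≤ K ∧ Past M d k s)
      (Past M d (K + 1))
    linarith

lemma four_mul_pow_le (l : ℕ) (hl : 25 ≤ l) : 4 * (l + 4) ^ 4 ≤ 2 ^ l := by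
  induction l, hl using Nat.le_induction with
  | base => norm_num
  | succ l hl ih =>
    have h1 : 29 * (l + 1 + 4) ≤ 30 * (l + 4) := by omega
    have h2 := Nat.pow_le_pow_left h1 4
    rw [mul_pow, mul_pow] at h2
    rw [pow_succ 2 l]
    omega

/-- The growth over the block from `Mᵏ⁻¹` to `Mᵏ` reaches `√(c · log₂ k · Mᵏ)` with probability at
least `1 / k`, so that these probabilities have a divergent sum. -/
lemma exists_le_pr_jump {M : ℕ} (hM : 2 ≤ M) {c c₂ : ℝ} (hc2 : 0 < c₂)
    (hlt : c₂ < 2 * Real.log 2) (hcM : c * M ≤ c₂ * (M - 1)) :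
    ∃ k₀, ∀ k, k₀ ≤ k → 1 / ((k + 1 : ℕ) : ℝ) ≤ pr (M ^ (k + 1) - M ^ k)
      (fun s => √(c * Nat.log 2 (k + 1) * M ^ (k + 1)) ≤ (walk s : ℝ)) := by
  set a := Real.log 2 - c₂ / 2 with ha
  have ha0 : 0 < a := by rw [ha]; linarith
  obtain ⟨l₀, hl₀⟩ := exists_nat_ge ((2 / a) * (8 * c₂ / a + 7))
  refine ⟨2 ^ (l₀ + 25), fun k hk => ?_⟩
  set l := Nat.log 2 (k + 1) with hl
  have hll : l₀ + 25 ≤ l := Nat.le_log_of_pow_le (by norm_num) (by omega)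
  have hlR : (2 / a) * (8 * c₂ / a + 7) ≤ l :=
    hl₀.trans (by exact_mod_cast (by omega : l₀ ≤ l))
  have hl0 : (0 : ℝ) ≤ l := by positivity
  have hlog2 := Real.log_two_lt_d9
  have hlog2' := Real.log_two_gt_d9
  set y := √(c₂ * l) with hy
  have hy0 : 0 ≤ y := Real.sqrt_nonneg _
  have hy2 : y ^ 2 = c₂ * l := Real.sq_sqrt (by positivity)
  have hk2 : 2 ^ l ≤ k + 1 := Nat.pow_log_le_self 2 (by omega)
  have hpow : M ^ (k + 1) = M ^ k + M ^ k * (M - 1) := by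
    obtain ⟨j, rfl⟩ : ∃ j, M = j + 1 := ⟨M - 1, by omega⟩
    rw [pow_succ, Nat.add_sub_cancel]; ring
  have hm : M ^ (k + 1) - M ^ k = M ^ k * (M - 1) := by omega
  rw [hm]
  set m := M ^ k * (M - 1) with hmdef
  have hmR : (m : ℝ) = (M : ℝ) ^ k * (M - 1) := by
    rw [hmdef, Nat.cast_mul, Nat.cast_sub (by omega)]; simp
  have hmk : 2 ^ k ≤ m :=
    calc 2 ^ k ≤ M ^ k * 1 := by rw [mul_one]; exact Nat.pow_le_pow_left hM k
      _ ≤ m := Nat.mul_le_mul_left _ (by omega)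
  have hlk : l ≤ k := by
    have := Nat.lt_two_pow_self (n := l)
    omega
  have hym : 2 * (y + 2) ^ 4 ≤ m := by
    have h1 : y ≤ l + 2 := by
      refine abs_le_of_sq_le_sq' ?_ (by positivity) |>.2
      rw [hy2]; nlinarith
    have h2 : (4 * ((l : ℝ) + 4) ^ 4) ≤ m := by
      exact_mod_cast (four_mul_pow_le l (by omega)).trans
        ((Nat.pow_le_pow_right (by norm_num) hlk).trans hmk)
    have h3 : (y + 2) ^ 4 ≤ ((l : ℝ) + 4) ^ 4 :=
      pow_le_pow_left₀ (by positivity) (by linarith) 4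
    have : 0 ≤ (y + 2) ^ 4 := by positivity
    linarith
  have hm0 : 0 < m := lt_of_lt_of_le (by positivity) hmk
  have key := le_pr_walk hm0 hy0 hym
  have hmono : pr m (fun s => y * √m ≤ (walk s : ℝ)) ≤
      pr m (fun s => √(c * l * M ^ (k + 1)) ≤ (walk s : ℝ)) := by
    refine pr_mono fun s _ h => le_trans ?_ h
    rw [hy, ← Real.sqrt_mul (by positivity)]
    apply Real.sqrt_le_sqrt
    rw [hmR, pow_succ]
    have : 0 ≤ l * (M : ℝ) ^ k := by positivity
    nlinarith
  refine le_trans ?_ (key.trans hmono)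
  -- it remains to compare exponents: `y² / 2 + 4 y + 6 + log 2 ≤ l log 2 ≤ log (k + 1)`
  have hexp : y ^ 2 / 2 + 4 * y + 6 + Real.log 2 ≤ l * Real.log 2 := by
    have h1 : 0 ≤ (a / (2 * c₂)) * (y - 4 * c₂ / a) ^ 2 := by positivity
    have h2 : (a / (2 * c₂)) * (y - 4 * c₂ / a) ^ 2 = a * l / 2 - 4 * y + 8 * c₂ / a := by
      have : (a / (2 * c₂)) * (y - 4 * c₂ / a) ^ 2 =
          a / (2 * c₂) * y ^ 2 - 4 * y + 8 * c₂ / a := by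
        field_simp; ring
      rw [this, hy2]; field_simp
    have h3 : 8 * c₂ / a + 7 ≤ a * l / 2 := by
      have := mul_le_mul_of_nonneg_left hlR (by positivity : 0 ≤ a / 2)
      calc 8 * c₂ / a + 7 = a / 2 * (2 / a * (8 * c₂ / a + 7)) := by field_simp
        _ ≤ a / 2 * l := this
        _ = _ := by ring
    have h4 : a * l = l * Real.log 2 - y ^ 2 / 2 := by rw [hy2, ha]; ring
    linarith
  calc 1 / ((k + 1 : ℕ) : ℝ) ≤ 1 / 2 ^ l := by
        apply one_div_le_one_div_of_le (by positivity)
        exact_mod_cast hk2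
    _ = Real.exp (-(l * Real.log 2)) := by
        rw [Real.exp_neg, Real.exp_nat_mul, Real.exp_log (by norm_num), one_div]
    _ ≤ Real.exp (-(y ^ 2 / 2 + 4 * y + 6) - Real.log 2) := by
        apply Real.exp_le_exp.2; linarith
    _ = _ := by rw [Real.exp_sub, Real.exp_log (by norm_num)]

lemma pr_no_jump_le {M : ℕ} (hM : 2 ≤ M) {c : ℝ} {k₁ K : ℕ} (hk : 1 ≤ k₁) (hK : k₁ ≤ K)
    (hj : ∀ k, k₁ ≤ k → 1 / ((k + 1 : ℕ) : ℝ) ≤ pr (M ^ (k + 1) - M ^ k)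
      (fun s => √(c * Nat.log 2 (k + 1) * M ^ (k + 1)) ≤ (walk s : ℝ))) :
    pr (M ^ K) (fun s => ∀ k, k₁ < k → k ≤ K → ¬ Jump M c k s) ≤ k₁ / K := by
  induction K, hK using Nat.le_induction with
  | base =>
    rw [div_self (by exact_mod_cast (by omega : k₁ ≠ 0))]
    exact pr_le_one _ _
  | succ K hK ih =>
    have hr : M ^ (K + 1) = M ^ K + (M ^ (K + 1) - M ^ K) := by
      have : M ^ K ≤ M ^ (K + 1) := Nat.pow_le_pow_right (by omega) (by omega)
      omega
    set m := M ^ (K + 1) - M ^ K with hm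
    have h1 : pr (M ^ (K + 1)) (fun s => ∀ k, k₁ < k → k ≤ K + 1 → ¬ Jump M c k s) ≤
        pr (M ^ (K + 1)) (fun s => (∀ k, k₁ < k → k ≤ K → ¬ Jump M c k (s.take (M ^ K))) ∧
          ¬ √(c * Nat.log 2 (K + 1) * M ^ (K + 1)) ≤ (walk (s.drop (M ^ K)) : ℝ)) := by
      refine pr_mono fun s hs h => ⟨fun k h1 h2 h3 => h k h1 (by omega) ?_, fun h3 =>
        h (K + 1) (by omega) le_rfl ?_⟩
      · unfold Jump at h3 ⊢
        rwa [List.take_take, min_eq_left (Nat.pow_le_pow_right (by omega) (by omega))] at h3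
      · unfold Jump
        rw [← hs, List.take_length]
        exact_mod_cast h3
    refine h1.trans ?_
    rw [hr, pr_append (M ^ K) m (fun u => ∀ k, k₁ < k → k ≤ K → ¬ Jump M c k u)
      (fun w => ¬ √(c * Nat.log 2 (K + 1) * M ^ (K + 1)) ≤ (walk w : ℝ)), pr_not]
    have h2 := hj K hK
    have hK0 : (0 : ℝ) < K := by exact_mod_cast (by omega : 0 < K)
    calc _ ≤ (k₁ / K : ℝ) * (1 - 1 / ((K + 1 : ℕ) : ℝ)) := by
          apply mul_le_mul ih (by linarith) _ (by positivity)
          linarith [pr_le_one m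
            (fun s => √(c * Nat.log 2 (K + 1) * M ^ (K + 1)) ≤ (walk s : ℝ))]
      _ = k₁ / (K + 1 : ℕ) := by push_cast; field_simp; ring

/-- For a suitable `M`, the walk almost surely exceeds `√(c · log₂ k · Mᵏ)` at time `Mᵏ` for
infinitely many `k`. The threshold `2 log 2` comes from `2 log k ≈ 2 log 2 · log₂ k`. -/
theorem exists_pr_not_good_le {c : ℝ} (hc : 0 < c) (hlt : c < 2 * Real.log 2) :
    ∃ M : ℕ, 2 ≤ M ∧ ∀ (k₁ : ℕ) (η : ℝ), 0 < η →
      ∃ K, pr (M ^ K) (fun s => ∀ k, k₁ ≤ k → k ≤ K → ¬ Good M c k s) ≤ η := by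
  -- `c < b < c₂ < 2 log 2`: thresholds for the position, for the jump, and for the jump
  -- normalized by the length of the block
  obtain ⟨c₂, h1, h2⟩ := exists_between hlt
  obtain ⟨b, h3, h4⟩ := exists_between h1
  set d := (√b - √c) ^ 2 with hd
  have hbc : √c < √b := Real.sqrt_lt_sqrt hc.le h3
  have hd0 : 0 < d := by have : 0 < √b - √c := sub_pos.2 hbc
                         positivity
  have hsq : √b = √c + √d := by rw [hd, Real.sqrt_sq (by linarith)]; ring
  obtain ⟨M, hM⟩ := exists_nat_ge (max 2 (max (4 * Real.log 2 / d) (c₂ / (c₂ - b))))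
  have hM2 : (2 : ℝ) ≤ M := (le_max_left _ _).trans hM
  have hMd : 4 * Real.log 2 ≤ M * d := by
    rw [← div_le_iff₀ hd0]
    exact (le_max_left _ _).trans ((le_max_right _ _).trans hM)
  have hMc : b * M ≤ c₂ * (M - 1) := by
    have : c₂ / (c₂ - b) ≤ M := (le_max_right _ _).trans ((le_max_right _ _).trans hM)
    rw [div_le_iff₀ (by linarith)] at this
    linarith
  have hM2' : 2 ≤ M := by exact_mod_cast hM2
  refine ⟨M, hM2', fun k₁ η hη => ?_⟩
  obtain ⟨k₀, hk₀⟩ := exists_le_pr_jump hM2' (hc.trans (h3.trans h4)) h2 hMc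
  obtain ⟨k₂, hk₂⟩ := exists_nat_ge (8 / η)
  set q := max (max k₀ k₁) (max k₂ 1) with hq
  have hq1 : 1 ≤ q := (le_max_right _ _).trans (le_max_right _ _)
  have hqk₀ : k₀ ≤ q := (le_max_left _ _).trans (le_max_left _ _)
  have hqk₁ : k₁ ≤ q := (le_max_right _ _).trans (le_max_left _ _)
  have hqk₂ : k₂ ≤ q := (le_max_left _ _).trans (le_max_right _ _)
  obtain ⟨K₀, hK₀⟩ := exists_nat_ge (2 * q / η)
  set K := max K₀ q with hK
  have hqK : q ≤ K := le_max_right _ _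
  refine ⟨K, ?_⟩
  have e1 := pr_no_jump_le hM2' (c := b) hq1 hqK fun k hk => hk₀ k (hqk₀.trans hk)
  have e2 := pr_exists_past_le hM2' hd0.le hMd hq1 hqK
  have e3 : pr (M ^ K) (fun s => ∀ k, k₁ ≤ k → k ≤ K → ¬ Good M c k s) ≤
      pr (M ^ K) (fun s => (∀ k, q < k → k ≤ K → ¬ Jump M b k s) ∨
        ∃ k, q < k ∧ k ≤ K ∧ Past M d k s) := by
    refine pr_mono fun s _ h => ?_
    by_contra! hcon
    obtain ⟨⟨k, g1, g2, g3⟩, g4⟩ := hcon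
    exact h k (by omega) g2
      (good_of_jump hM2' hc.le hd0.le (hc.trans h3).le hsq g3 (g4 k g1 g2))
  have e4 := pr_or_le (M ^ K) (fun s => ∀ k, q < k → k ≤ K → ¬ Jump M b k s)
    (fun s => ∃ k, q < k ∧ k ≤ K ∧ Past M d k s)
  have hq0 : (0 : ℝ) < q := by exact_mod_cast hq1
  have hK0 : (0 : ℝ) < K := by exact_mod_cast (lt_of_lt_of_le hq1 hqK)
  have e5 : (q / K : ℝ) ≤ η / 2 := by
    have : 2 * q / η ≤ (K : ℝ) := hK₀.trans (by exact_mod_cast le_max_left K₀ q)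
    rw [div_le_iff₀ hη] at this
    rw [div_le_iff₀ hK0]
    linarith
  have e6 : (4 / q : ℝ) ≤ η / 2 := by
    have : 8 / η ≤ (q : ℝ) := hk₂.trans (by exact_mod_cast hqk₂)
    rw [div_le_iff₀ hη] at this
    rw [div_le_iff₀ hq0]
    linarith
  have e7 : (0 : ℝ) < 4 / K := by positivity
  linarith

end Blocks

/-! ### The test is primitive recursive -/

section Test

/-- The number of occurrences of the symbol `b` in a string. -/
def cnt (b : Bool) (s : List Bool) : ℕ := (s.filter fun a => a = b).length

lemma walk_eq_cnt (s : List Bool) : walk s = cnt true s - cnt false s := by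
  induction s with
  | nil => rfl
  | cons a s ih =>
    have h : walk (a :: s) = (if a then 1 else -1) + walk s := by simp [walk]
    rw [h, ih]
    cases a <;> simp [cnt] <;> ring

/-- An arithmetical form of `Good M (p / q) k s`, in which all quantities are natural numbers. -/
def GoodN (M p q k : ℕ) (s : List Bool) : Prop :=
  cnt false (s.take (M ^ k)) ≤ cnt true (s.take (M ^ k)) ∧
    p * Nat.log 2 k * M ^ k ≤
      q * (cnt true (s.take (M ^ k)) - cnt false (s.take (M ^ k))) ^ 2

instance (M p q k : ℕ) : DecidablePred (GoodN M p q k) :=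
  fun _ => inferInstanceAs (Decidable (_ ∧ _))

lemma goodN_iff {M p q k : ℕ} (hq : 0 < q) (s : List Bool) :
    GoodN M p q k s ↔ Good M ((p : ℝ) / q) k s := by
  unfold GoodN Good
  rw [Real.sqrt_le_iff, walk_eq_cnt]
  set a := cnt true (s.take (M ^ k))
  set b := cnt false (s.take (M ^ k))
  have hq' : (0 : ℝ) < q := by exact_mod_cast hq
  have h1 : (0 : ℝ) ≤ (((a : ℤ) - (b : ℤ) : ℤ) : ℝ) ↔ b ≤ a := by
    push_cast
    rw [sub_nonneg]
    exact Nat.cast_le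
  rw [h1]
  refine and_congr_right fun hba => ?_
  have h2 : (((a : ℤ) - (b : ℤ) : ℤ) : ℝ) = ((a - b : ℕ) : ℝ) := by
    rw [Nat.cast_sub hba]; push_cast; ring
  rw [h2, show (p : ℝ) / q * Nat.log 2 k * (M : ℝ) ^ k = p * Nat.log 2 k * (M : ℝ) ^ k / q by ring,
    div_le_iff₀ hq', mul_comm _ (q : ℝ)]
  exact_mod_cast Iff.rfl

/-- The test that a string (or its complement, if `b = true`) has not been good at any of the
times `Mᵏ` with `k₁ ≤ k ≤ K`. -/
def NoGood (M p q : ℕ) (b : Bool) (k₁ K : ℕ) (s : List Bool) : Prop :=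
  ∀ k ∈ List.range (K + 1), k < k₁ ∨ ¬ GoodN M p q k (s.map (xor b))

instance (M p q : ℕ) (b : Bool) (k₁ : ℕ) : DecidableRel (NoGood M p q b k₁) :=
  fun K _ => inferInstanceAs (Decidable (∀ k ∈ List.range (K + 1), _))

lemma primrec_pow : Primrec₂ ((· ^ ·) : ℕ → ℕ → ℕ) := Primrec₂.unpaired'.1 Nat.Primrec.pow

lemma primrec_log_two : Primrec (Nat.log 2) := by
  have h : PrimrecRel fun k j : ℕ => 2 ^ j ≤ k :=
    Primrec.nat_le.comp (primrec_pow.comp (Primrec.const 2) Primrec.snd) Primrec.fst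
  refine (Primrec.nat_findGreatest Primrec.id h).of_eq fun k => ?_
  rcases Nat.eq_zero_or_pos k with rfl | hk
  · simp
  · refine (Nat.findGreatest_eq_iff).2 ⟨Nat.log_le_self 2 k, fun _ =>
      Nat.pow_log_le_self 2 hk.ne', fun j h1 _ h3 => ?_⟩
    exact absurd (Nat.le_log_of_pow_le (by norm_num) h3) (by omega)

lemma primrec_cnt (b : Bool) : Primrec (cnt b) :=
  Primrec.list_length.comp
    (Primrec.listFilter (Primrec.eq.comp Primrec.id (Primrec.const b)))

lemma primrec_goodN (M p q : ℕ) : PrimrecRel fun (k : ℕ) (s : List Bool) => GoodN M p q k s := by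
  have hM : Primrec fun k : ℕ => M ^ k := primrec_pow.comp (Primrec.const M) Primrec.id
  have ht : Primrec fun z : ℕ × List Bool => z.2.take (M ^ z.1) :=
    Primrec.list_take.comp (hM.comp Primrec.fst) Primrec.snd
  have ha := (primrec_cnt true).comp ht
  have hb := (primrec_cnt false).comp ht
  refine PrimrecPred.and (Primrec.nat_le.comp hb ha) (Primrec.nat_le.comp ?_ ?_)
  · exact Primrec.nat_mul.comp (Primrec.nat_mul.comp (Primrec.const p)
      (primrec_log_two.comp Primrec.fst)) (hM.comp Primrec.fst)
  · exact Primrec.nat_mul.comp (Primrec.const q)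
      (primrec_pow.comp (Primrec.nat_sub.comp ha hb) (Primrec.const 2))

lemma primrec_noGood (M p q : ℕ) (b : Bool) (k₁ : ℕ) : PrimrecRel (NoGood M p q b k₁) := by
  have hm : Primrec fun s : List Bool => s.map (xor b) :=
    Primrec.list_map Primrec.id ((Primrec.dom_bool (xor b)).comp Primrec.snd)
  have h : PrimrecRel fun (k : ℕ) (s : List Bool) => k < k₁ ∨ ¬ GoodN M p q k (s.map (xor b)) :=
    PrimrecPred.or (Primrec.nat_lt.comp Primrec.fst (Primrec.const k₁))
      (PrimrecPred.not ((primrec_goodN M p q).comp Primrec.fst (hm.comp Primrec.snd)))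
  exact h.forall_mem_list.comp
    (Primrec.list_range.comp (Primrec.succ.comp Primrec.fst)) Primrec.snd

lemma pr_map_xor (n : ℕ) (b : Bool) (P : List Bool → Prop) :
    pr n (fun s => P (s.map (xor b))) = pr n P := by
  cases b
  · refine pr_congr fun s _ => ?_
    have : s.map (xor false) = s := by
      rw [show xor false = id from funext fun a => by simp, List.map_id]
    rw [this]
  · rw [← pr_map_not n P]
    refine pr_congr fun s _ => ?_
    rw [show xor true = not from funext fun a => by simp]

/-- Along a random sequence, and along its complement, the walk exceeds `√(c · log₂ k · Mᵏ)` at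
time `Mᵏ` for infinitely many `k`. -/
theorem frequently_good {x : ℕ → Bool} (hx : MLSCRandom x) {c : ℝ} (hc : 0 < c)
    (hlt : c < 2 * Real.log 2) :
    ∃ M : ℕ, 2 ≤ M ∧ ∀ (b : Bool) (k₁ : ℕ), ∃ k, k₁ ≤ k ∧
      √(c * Nat.log 2 k * M ^ k) ≤ walk ((prefixOf x (M ^ k)).map (xor b)) := by
  obtain ⟨c', h1, h2⟩ := exists_rat_btwn hlt
  have hc' : (0 : ℝ) < c' := hc.trans h1
  have hc'0 : 0 < c' := by exact_mod_cast hc'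
  obtain ⟨M, hM, hpr⟩ := exists_pr_not_good_le hc' h2
  refine ⟨M, hM, fun b k₁ => ?_⟩
  set p := c'.num.toNat with hp
  set q := c'.den with hq
  have hq0 : 0 < q := c'.den_pos
  have hpq : (p : ℝ) / q = c' := by
    have h : ((p : ℤ) : ℝ) = (c'.num : ℝ) := by
      rw [hp, Int.toNat_of_nonneg (Rat.num_pos.2 hc'0).le]
    have h' : (p : ℝ) = (c'.num : ℝ) := by exact_mod_cast h
    rw [h', hq]
    exact (Rat.cast_def c').symm
  have hno : ∀ K s, NoGood M p q b k₁ K s ↔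
      ∀ k, k₁ ≤ k → k ≤ K → ¬ Good M c' k (s.map (xor b)) := by
    intro K s
    unfold NoGood
    refine forall_congr' fun k => ?_
    rw [goodN_iff hq0, hpq, List.mem_range]
    constructor
    · intro h g1 g2
      exact (h (by omega)).resolve_left (by omega)
    · intro h g1
      by_cases g : k < k₁
      · exact Or.inl g
      · exact Or.inr (h (by omega) (by omega))
  have hN : Primrec fun K : ℕ => M ^ K := primrec_pow.comp (Primrec.const M) Primrec.id
  obtain ⟨K, hK⟩ := exists_not_of_random hx hN (primrec_noGood M p q b k₁) fun m => by
    obtain ⟨K, hK⟩ := hpr k₁ (1 / 4 ^ m) (by positivity)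
    refine ⟨K, ?_⟩
    have e1 := length_filter_strs (M ^ K) (NoGood M p q b k₁ K)
    have e2 : pr (M ^ K) (NoGood M p q b k₁ K) ≤ 1 / 4 ^ m := by
      rw [pr_congr fun _ _ => hno K _,
        pr_map_xor (M ^ K) b fun s => ∀ k, k₁ ≤ k → k ≤ K → ¬ Good M c' k s]
      exact hK
    rw [le_div_iff₀ (by positivity)] at e2
    have e3 : ((hits (fun K => M ^ K) (NoGood M p q b k₁) K).length : ℝ) * 4 ^ m ≤
        2 ^ (M ^ K) := by
      unfold hits
      rw [e1, mul_assoc]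
      exact mul_le_of_le_one_right (by positivity) e2
    exact_mod_cast e3
  rw [hno] at hK
  push Not at hK
  obtain ⟨k, g1, g2, g3⟩ := hK
  refine ⟨k, g1, ?_⟩
  unfold Good at g3
  have htake : (((prefixOf x (M ^ K)).map (xor b)).take (M ^ k)) =
      (prefixOf x (M ^ k)).map (xor b) := by
    rw [← List.map_take]
    unfold prefixOf
    rw [← List.map_take, List.take_range, min_eq_left (Nat.pow_le_pow_right (by omega) g2)]
  rw [htake] at g3
  refine le_trans (Real.sqrt_le_sqrt ?_) g3
  gcongr

lemma walk_prefixOf (x : ℕ → Bool) (n : ℕ) : walk (prefixOf x n) = signedSum x n := by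
  induction n with
  | zero => simp [walk, prefixOf, signedSum]
  | succ n ih =>
    have h : prefixOf x (n + 1) = prefixOf x n ++ [x n] := by simp [prefixOf, List.range_succ]
    rw [h, walk_append, ih, signedSum, signedSum, Finset.sum_range_succ]
    simp [walk]

lemma walk_map_xor (b : Bool) (s : List Bool) :
    walk (s.map (xor b)) = if b then -walk s else walk s := by
  induction s with
  | nil => simp [walk]
  | cons a s ih =>
    have h : ∀ (a : Bool) (s : List Bool), walk (a :: s) = (if a then 1 else -1) + walk s := by
      intro a s; simp [walk]
    rw [List.map_cons, h, h, ih]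
    cases a <;> cases b <;> simp <;> ring

end Test

/-! ### Crossing the level `(1 - ε) φ` -/

section Crossing

lemma one_lt_log {n : ℕ} (hn : 3 ≤ n) : 1 < Real.log n := by
  rw [Real.lt_log_iff_exp_lt (by positivity)]
  have h3 : (3 : ℝ) ≤ n := by exact_mod_cast hn
  linarith [Real.exp_one_lt_d9]

lemma phi_mono {m n : ℕ} (hm : 3 ≤ m) (hmn : m ≤ n) : phi m ≤ phi n := by
  have hmn' : (m : ℝ) ≤ n := by exact_mod_cast hmn
  have h1 := one_lt_log hm
  have h0 : (0 : ℝ) < m := by positivity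
  have h2 : 0 ≤ Real.log (Real.log m) := Real.log_nonneg h1.le
  unfold phi
  gcongr

lemma exists_lt_phi (a : ℝ) : ∃ n₀, ∀ n, n₀ ≤ n → a < phi n := by
  set L := Real.log (Real.log (3 : ℕ)) with hL
  have hL0 : 0 < L := Real.log_pos (one_lt_log le_rfl)
  obtain ⟨n₀, hn₀⟩ := exists_nat_gt (a ^ 2 / (2 * L))
  refine ⟨max n₀ 3, fun n hn => Real.lt_sqrt_of_sq_lt ?_⟩
  have h3 : 3 ≤ n := (le_max_right _ _).trans hn
  have h1 : L ≤ Real.log (Real.log n) := by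
    have := one_lt_log (le_refl 3)
    rw [hL]
    gcongr
  have h2 : a ^ 2 / (2 * L) < n :=
    hn₀.trans_le (by exact_mod_cast (le_max_left _ _).trans hn)
  rw [div_lt_iff₀ (by positivity)] at h2
  have : (0 : ℝ) ≤ n := by positivity
  nlinarith

/-- The iterated logarithm at `Mᵏ` is `log k + O(1)`, and `log k` is `log 2 · log₂ k + O(1)`. -/
lemma exists_mul_phi_lt {M : ℕ} (hM : 2 ≤ M) {r c : ℝ} (hr : 0 < r)
    (hrc : r ^ 2 * (2 * Real.log 2) < c) :
    ∃ k₀, ∀ k, k₀ ≤ k → r * phi (M ^ k) < √(c * Nat.log 2 k * M ^ k) := by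
  set B := Real.log (Real.log M) with hB
  set δ := c - r ^ 2 * (2 * Real.log 2) with hδ
  have hδ0 : 0 < δ := by rw [hδ]; linarith
  have hlog2 : 0 < Real.log 2 := Real.log_pos (by norm_num)
  have hc0 : 0 < c := lt_trans (by positivity) hrc
  obtain ⟨l₀, hl₀⟩ := exists_nat_gt (r ^ 2 * (2 * Real.log 2 + 2 * B) / δ)
  refine ⟨2 ^ (l₀ + 1), fun k hk => ?_⟩
  set l := Nat.log 2 k with hl
  have hll : l₀ + 1 ≤ l := Nat.le_log_of_pow_le (by norm_num) hk
  have hlR : r ^ 2 * (2 * Real.log 2 + 2 * B) / δ < l :=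
    hl₀.trans (by exact_mod_cast (by omega : l₀ < l))
  rw [div_lt_iff₀ hδ0] at hlR
  have hk0 : 0 < k := lt_of_lt_of_le (by positivity) hk
  have hkR : (0 : ℝ) < k := by exact_mod_cast hk0
  have hl0 : (0 : ℝ) < l := by exact_mod_cast (by omega : 0 < l)
  have hM0 : (0 : ℝ) < (M : ℝ) ^ k := by positivity
  have hlogM : 0 < Real.log M := Real.log_pos (by exact_mod_cast (by omega : 1 < M))
  have hlogk : Real.log k ≤ (l + 1) * Real.log 2 := by
    have h : ((k : ℕ) : ℝ) ≤ 2 ^ (l + 1) := by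
      exact_mod_cast (Nat.lt_pow_succ_log_self (by norm_num) k).le
    have := Real.log_le_log hkR h
    rw [Real.log_pow] at this
    exact_mod_cast this
  have hphi : r * phi (M ^ k) = √(r ^ 2 * (2 * M ^ k * (Real.log k + B))) := by
    rw [Real.sqrt_mul (by positivity), Real.sqrt_sq hr.le, phi]
    push_cast
    rw [Real.log_pow, Real.log_mul hkR.ne' hlogM.ne']
  rw [hphi, Real.sqrt_lt_sqrt_iff_of_pos (by positivity)]
  have h1 : r ^ 2 * (2 * (Real.log k + B)) < c * l := by
    have h2 : r ^ 2 * (2 * (Real.log k + B)) ≤ r ^ 2 * (2 * ((l + 1) * Real.log 2 + B)) := by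
      gcongr
    rw [hδ] at hlR
    linarith
  calc r ^ 2 * (2 * M ^ k * (Real.log k + B)) = r ^ 2 * (2 * (Real.log k + B)) * M ^ k := by ring
    _ < c * l * M ^ k := by gcongr

lemma signedSum_succ_le (x : ℕ → Bool) (n : ℕ) :
    (signedSum x (n + 1) : ℝ) ≤ signedSum x n + 1 := by
  have h : signedSum x (n + 1) ≤ signedSum x n + 1 := by
    unfold signedSum
    rw [Finset.sum_range_succ]
    split_ifs <;> omega
  exact_mod_cast h

/-- A walk that is infinitely often nonpositive and infinitely often above `(1 - ε) φ` crosses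
`(1 - ε) φ` upwards infinitely often; right after a crossing it is within `1` of that level. -/
lemma infinite_of_crossing (x : ℕ → Bool) {ε : ℝ} (hε : 0 < ε) (hε1 : ε ≤ 1)
    (hlow : ∀ n₀, ∃ n, n₀ ≤ n ∧ (signedSum x n : ℝ) ≤ 0)
    (hhigh : ∀ n₀, ∃ n, n₀ ≤ n ∧ (1 - ε) * phi n < signedSum x n) :
    {n : ℕ | 3 ≤ n ∧ (signedSum x n : ℝ) / phi n ∈ Set.Ioo (1 - ε) (1 + ε)}.Infinite := by
  rw [Set.infinite_iff_exists_gt]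
  intro n₀
  obtain ⟨n₁, hn₁⟩ := exists_lt_phi (1 / (2 * ε))
  obtain ⟨u, hu, hSu⟩ := hlow (max (max n₀ n₁) 3)
  have hu3 : 3 ≤ u := (le_max_right _ _).trans hu
  have hun₀ : n₀ ≤ u := (le_max_left _ _).trans ((le_max_left _ _).trans hu)
  have hun₁ : n₁ ≤ u := (le_max_right _ _).trans ((le_max_left _ _).trans hu)
  have hex : ∃ n, u ≤ n ∧ (1 - ε) * phi n < signedSum x n := hhigh u
  classical
  set v := Nat.find hex with hv
  obtain ⟨huv, hSv⟩ := Nat.find_spec hex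
  rw [← hv] at huv hSv
  have hphi0 : ∀ n, 0 ≤ phi n := fun n => Real.sqrt_nonneg _
  have huv' : u ≠ v := by
    intro h
    rw [← h] at hSv
    have := mul_nonneg (sub_nonneg.2 hε1) (hphi0 u)
    linarith
  obtain ⟨i, hi⟩ : ∃ i, v = i + 1 := ⟨v - 1, by omega⟩
  have hmin : ¬ (u ≤ i ∧ (1 - ε) * phi i < signedSum x i) := Nat.find_min hex (by omega)
  have hSi : (signedSum x i : ℝ) ≤ (1 - ε) * phi i := by
    by_contra! h
    exact hmin ⟨by omega, h⟩
  have hmono : (1 - ε) * phi i ≤ (1 - ε) * phi v :=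
    mul_le_mul_of_nonneg_left (phi_mono (by omega) (by omega)) (sub_nonneg.2 hε1)
  have hstep := signedSum_succ_le x i
  rw [← hi] at hstep
  have hbig := hn₁ v (by omega)
  have hv0 : 0 < phi v := lt_trans (by positivity) hbig
  rw [div_lt_iff₀ (by positivity)] at hbig
  refine ⟨v, ⟨by omega, ?_, ?_⟩, by omega⟩
  · rwa [lt_div_iff₀ hv0]
  · rw [div_lt_iff₀ hv0]
    linarith

end Crossing

end LIL

/-- **Martin-Löf–Solovay–Chaitin random sequences obey the Law of the Iterated Logarithm:**
for every MLSC random sequence `x` and every `ε > 0`, the set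
`{n : n ≥ 3 ∧ Sₙ(x)/φ(n) ∈ (1 − ε, 1 + ε)}` is infinite. -/
theorem mlsc_random_obeys_lil (x : ℕ → Bool) (hx : MLSCRandom x) (ε : ℝ) (hε : 0 < ε) :
    {n : ℕ | 3 ≤ n ∧ (signedSum x n : ℝ) / phi n ∈ Set.Ioo (1 - ε) (1 + ε)}.Infinite := by
  set ε' := min ε (1 / 2) with hε'
  have h0 : 0 < ε' := lt_min hε (by norm_num)
  have h1 : ε' ≤ 1 / 2 := min_le_right _ _
  have hle : ε' ≤ ε := min_le_left _ _
  have hlog2 : 0 < Real.log 2 := Real.log_pos (by norm_num)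
  obtain ⟨c, hc1, hc2⟩ : ∃ c, (1 - ε') ^ 2 * (2 * Real.log 2) < c ∧ c < 2 * Real.log 2 := by
    refine exists_between (mul_lt_of_lt_one_left (by positivity) ?_)
    nlinarith
  have hr : 0 < 1 - ε' := by linarith
  obtain ⟨M, hM, hgood⟩ := LIL.frequently_good hx (lt_trans (by positivity) hc1) hc2
  obtain ⟨k₀, hk₀⟩ := LIL.exists_mul_phi_lt hM hr hc1
  have hpow : ∀ k, k ≤ M ^ k := fun k => (Nat.lt_pow_self (by omega)).le
  refine (LIL.infinite_of_crossing x h0 (by linarith) (fun n₀ => ?_) (fun n₀ => ?_)).mono ?_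
  · obtain ⟨k, hk, h⟩ := hgood true n₀
    rw [LIL.walk_map_xor, if_pos rfl, LIL.walk_prefixOf, Int.cast_neg] at h
    exact ⟨M ^ k, hk.trans (hpow k), by linarith [(Real.sqrt_nonneg _).trans h]⟩
  · obtain ⟨k, hk, h⟩ := hgood false (max n₀ k₀)
    rw [LIL.walk_map_xor, if_neg (by simp), LIL.walk_prefixOf] at h
    exact ⟨M ^ k, ((le_max_left _ _).trans hk).trans (hpow k),
      (hk₀ k ((le_max_right _ _).trans hk)).trans_le h⟩
  · rintro n ⟨hn, hn1, hn2⟩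
    exact ⟨hn, by linarith, by linarith⟩
end

section
/- (There exist Von Mises–Church random sequences violating the Law of the Iterated Logarithm.) There exist a Von Mises–Church random sequence x : ℕ → Bool and a real number ε > 0 such that the set {n ∈ ℕ : n ≥ 3 and Sₙ(x)/φ(n) ∈ (1 − ε, 1 + ε)} is finite. -/
/-!
The proof is a deterministic construction of a sequence with `Sₙ(x) ≤ 0` for every `n`, in the
spirit of Ville. Then `Sₙ(x)/φ(n)` never enters `(1/2, 3/2)`.

Fix an enumeration `g 0, g 1, …` of all partial recursive selection rules, read as total
predicates on prefixes (an undefined value counts as rejection). At time `n` the decisions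
`g 0, g 1, …` on the current prefix form a branch of the binary tree. The position `n` is assigned
to the first node on this branch, at depth `k` say, to which at most `k` earlier positions were
assigned. Along the positions assigned to a given node the bits alternate `false, true, false, …`,
so each node contributes `-1` or `0` to every signed sum; this gives `Sₙ ≤ 0`.

For the rule `g j`, the positions assigned to a node at depth `> j` are either all selected or all
rejected. Hence, for `L > j`, the signed sum over the selected positions is at most, in absolute
value, the (bounded) number of positions assigned to depths `≤ L` plus the number of visited nodes
at depth `> L` lying in the selected part of the tree. The parent of such a node is full, so at
least `L + 1` selected positions are assigned to it, and a parent has two children: the number of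
these nodes is at most `2m / (L + 1)` when `m` positions are selected. As `L` is arbitrary, the
signed sum is `o(m)`.
-/

open Filter

/-- Number of `true`'s among the first `n` digits of `x`. -/
def trueCount (x : ℕ → Bool) (n : ℕ) : ℕ :=
  ((Finset.range n).filter (fun i => x i = true)).card

/-- The index `n ≥ 1` is selected by the selection rule `f` along `x`:
`f(x₁, …, x_{n−1})` is defined and equals `true`.  (Position `n` carries the bit
`x (n-1)` since `x` is indexed from `0`.) -/
def SelectedAt (f : List Bool →. Bool) (x : ℕ → Bool) (n : ℕ) : Prop :=
  1 ≤ n ∧ f (prefixOf x (n - 1)) = Part.some true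

/-- The subsequence of `x` along the selected indices, in increasing order:
the `k`-th term is the bit of `x` at the `k`-th selected index. -/
noncomputable def selectedSeq (f : List Bool →. Bool) (x : ℕ → Bool) (k : ℕ) : Bool :=
  x (Nat.nth (SelectedAt f x) k - 1)

/-- A sequence `x` is Von Mises–Church random if the frequency of `true`'s in its prefixes
tends to `1/2`, and for every partial recursive selection rule `f` selecting infinitely
many indices along `x`, the frequency of `true`'s along the selected subsequence also
tends to `1/2`. -/
def VMCRandom (x : ℕ → Bool) : Prop :=
  Tendsto (fun n : ℕ => (trueCount x n : ℝ) / n) atTop (nhds (1 / 2)) ∧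
  ∀ f : List Bool →. Bool, Partrec f → {n : ℕ | SelectedAt f x n}.Infinite →
    Tendsto
      (fun m : ℕ =>
        ((((Finset.range m).filter (fun k => selectedSeq f x k = true)).card : ℝ) / m))
      atTop (nhds (1 / 2))

namespace Ville

/-! ### The construction -/

/-- The node at depth `k` on the branch `v` of the binary tree: the list `[v (k-1), …, v 0]`.
The order is reversed so that the parent of a node is its tail. -/
def path (v : ℕ → Bool) : ℕ → List Bool
  | 0 => []
  | k + 1 => v k :: path v k

@[simp] lemma path_length (v : ℕ → Bool) (k : ℕ) : (path v k).length = k := by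
  induction k with
  | zero => rfl
  | succ k ih => simp [path, ih]

lemma path_inj {v w : ℕ → Bool} {k j : ℕ} (h : path v k = path w k) (hj : j < k) :
    v j = w j := by
  induction k with
  | zero => omega
  | succ k ih =>
    simp only [path, List.cons.injEq] at h
    rcases Nat.lt_succ_iff_lt_or_eq.1 hj with h1 | h1
    · exact ih h.2 h1
    · subst h1; exact h.1

section

variable (g : ℕ → List Bool → Bool)

/-- The depth of the node receiving the next position. A state `s` consists of the prefix built
so far and the list of nodes (latest first) to which its positions were assigned; a node at depth
`k` is full once it has received `k + 1` positions. -/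
noncomputable def level (s : List Bool × List (List Bool)) : ℕ :=
  sInf {k | s.2.count (path (fun j => g j s.1) k) < k + 1}

/-- The node receiving the next position. -/
noncomputable def nextNode (s : List Bool × List (List Bool)) : List Bool :=
  path (fun j => g j s.1) (level g s)

/-- The next bit: `false` at the first visit of a node, and alternating from then on. -/
noncomputable def nextBit (s : List Bool × List (List Bool)) : Bool :=
  decide (Odd (s.2.count (nextNode g s)))

/-- The state after `n` steps of the construction. -/
noncomputable def st : ℕ → List Bool × List (List Bool)
  | 0 => ([], [])
  | n + 1 => ((st n).1 ++ [nextBit g (st n)], nextNode g (st n) :: (st n).2)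

/-- The constructed sequence. -/
noncomputable def seq (n : ℕ) : Bool := nextBit g (st g n)

/-- The node to which position `n` is assigned. -/
noncomputable def node (n : ℕ) : List Bool := nextNode g (st g n)

lemma st_fst (n : ℕ) : (st g n).1 = prefixOf (seq g) n := by
  induction n with
  | zero => rfl
  | succ n ih =>
    simp only [prefixOf, List.range_succ, List.map_append, List.map_cons, List.map_nil]
    rw [← prefixOf, ← ih]
    rfl

/-- The number of positions before `n` assigned to the node `σ`. -/
noncomputable def cnt (n : ℕ) (σ : List Bool) : ℕ :=
  ((Finset.range n).filter (fun i => node g i = σ)).card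

lemma cnt_succ (n : ℕ) (σ : List Bool) :
    cnt g (n + 1) σ = cnt g n σ + if node g n = σ then 1 else 0 := by
  unfold cnt
  rw [Finset.range_add_one, Finset.filter_insert]
  split_ifs <;> simp

lemma cnt_mono {m n : ℕ} (h : m ≤ n) (σ : List Bool) : cnt g m σ ≤ cnt g n σ :=
  Finset.card_le_card (Finset.filter_subset_filter _ (Finset.range_mono h))

lemma st_snd_count (n : ℕ) (σ : List Bool) : (st g n).2.count σ = cnt g n σ := by
  induction n with
  | zero => simp [st, cnt]
  | succ n ih =>
    rw [cnt_succ, ← ih]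
    simp only [st, List.count_cons, beq_iff_eq]
    rfl

/-- The decision of the `j`-th rule at time `n` along the constructed sequence. -/
noncomputable def dec (n j : ℕ) : Bool := g j (prefixOf (seq g) n)

lemma seq_eq (n : ℕ) : seq g n = decide (Odd (cnt g n (node g n))) := by
  rw [← st_snd_count]; rfl

lemma node_eq (n : ℕ) : node g n = path (dec g n) (level g (st g n)) := by
  unfold dec
  rw [← st_fst]; rfl

lemma level_eq (n : ℕ) :
    level g (st g n) = sInf {k | cnt g n (path (dec g n) k) < k + 1} := by
  unfold dec level
  simp only [st_snd_count, st_fst]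

lemma node_length (n : ℕ) : (node g n).length = level g (st g n) := by
  rw [node_eq, path_length]

lemma cnt_node_lt (n : ℕ) : cnt g n (node g n) < (node g n).length + 1 := by
  have hne : {k | cnt g n (path (dec g n) k) < k + 1}.Nonempty := by
    refine ⟨n, ?_⟩
    have : cnt g n (path (dec g n) n) ≤ n := by
      simpa [cnt] using Finset.card_filter_le (Finset.range n) (fun i => node g i = path (dec g n) n)
    exact Nat.lt_succ_of_le this
  have := Nat.sInf_mem hne
  rw [← level_eq] at this
  rw [node_length, node_eq]
  exact this

lemma cnt_full (n k : ℕ) (hk : k < (node g n).length) :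
    k + 1 ≤ cnt g n (path (dec g n) k) := by
  rw [node_length, level_eq] at hk
  have := Nat.notMem_of_lt_sInf hk
  simpa using this

lemma cnt_le (n : ℕ) (σ : List Bool) : cnt g n σ ≤ σ.length + 1 := by
  induction n with
  | zero => simp [cnt]
  | succ n ih =>
    rw [cnt_succ]
    split_ifs with h
    · have := cnt_node_lt g n
      rw [h] at this
      omega
    · simpa using ih

/-- A node at depth `> j` determines the decision of the `j`-th rule. -/
lemma dec_eq_of_node {i i' j : ℕ} (h : node g i = node g i') (hj : j < (node g i).length) :
    dec g i j = dec g i' j := by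
  have hl : level g (st g i) = level g (st g i') := by
    rw [← node_length, ← node_length, h]
  rw [node_length] at hj
  rw [node_eq, node_eq, ← hl] at h
  exact path_inj h hj

/-! ### Signed sums -/

/-- The sign `±1` of a bit of the constructed sequence. -/
noncomputable def sgn (n : ℕ) : ℤ := if seq g n then 1 else -1

lemma abs_sgn (n : ℕ) : |sgn g n| = 1 := by
  unfold sgn; split_ifs <;> simp

/-- The bits assigned to one node alternate, starting with `false`. -/
lemma sum_node (n : ℕ) (σ : List Bool) :
    ∑ i ∈ (Finset.range n).filter (fun i => node g i = σ), sgn g i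
      = if Odd (cnt g n σ) then -1 else 0 := by
  induction n with
  | zero => simp [cnt]
  | succ n ih =>
    rw [cnt_succ, Finset.range_add_one, Finset.filter_insert]
    split_ifs with h h2 h2
    · rw [Finset.sum_insert (by simp), ih, sgn, seq_eq, h]
      have : ¬ Odd (cnt g n σ) := by
        intro h3; exact (Nat.not_odd_iff_even.2 h3.add_one) h2
      simp [this]
    · rw [Finset.sum_insert (by simp), ih, sgn, seq_eq, h]
      have : Odd (cnt g n σ) := by
        by_contra h3; exact h2 (Nat.not_odd_iff_even.1 h3).add_one
      simp [this]
    · rw [ih, if_pos (by simpa using h2)]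
    · rw [ih, if_neg (by simpa using h2)]

lemma signedSum_nonpos (n : ℕ) : signedSum (seq g) n ≤ 0 := by
  change ∑ i ∈ Finset.range n, sgn g i ≤ 0
  rw [← Finset.sum_fiberwise_of_maps_to
    (t := (Finset.range n).image (node g)) (g := node g)
    (fun i hi => Finset.mem_image_of_mem _ hi)]
  refine Finset.sum_nonpos fun σ _ => ?_
  rw [sum_node]
  split_ifs <;> simp

/-- The positions before `n` selected by the `j`-th rule. -/
noncomputable def sel (j n : ℕ) : Finset ℕ := (Finset.range n).filter (fun i => dec g i j = true)

/-- Only boundedly many positions are assigned to nodes of bounded depth. -/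
lemma exists_low_bound (L : ℕ) : ∃ C : ℕ, ∀ n,
    ((Finset.range n).filter (fun i => (node g i).length ≤ L)).card ≤ C := by
  have hfin : {l : List Bool | l.length ≤ L}.Finite := List.finite_length_le Bool L
  refine ⟨(L + 1) * hfin.toFinset.card, fun n => ?_⟩
  refine Finset.card_le_mul_card_image_of_maps_to (f := node g) ?_ _ ?_
  · intro i hi
    simpa using (Finset.mem_filter.1 hi).2
  · intro σ hσ
    have h1 : σ.length ≤ L := by simpa using hσ
    refine le_trans (Finset.card_le_card ?_) ((cnt_le g n σ).trans (by omega))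
    intro i hi
    simp only [Finset.mem_filter] at hi ⊢
    exact ⟨hi.1.1, hi.2⟩

/-- The visited nodes at depth `> L` in the part of the tree selected by rule `j`. -/
noncomputable def highNodes (j L n : ℕ) : Finset (List Bool) :=
  ((sel g j n).filter (fun i => L < (node g i).length)).image (node g)

/-- The parents of the nodes in `highNodes` are full, and have at most two children each. -/
lemma card_highNodes (j L n : ℕ) (hL : j < L) :
    (highNodes g j L n).card * (L + 1) ≤ (sel g j n).card * 2 := by
  refine Finset.card_mul_le_card_mul (fun σ i => node g i = σ.tail) ?_ ?_
  · intro σ hσ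
    obtain ⟨i, hi, rfl⟩ := Finset.mem_image.1 hσ
    simp only [sel, Finset.mem_filter, Finset.mem_range] at hi
    obtain ⟨⟨hin, hdec⟩, hlen⟩ := hi
    obtain ⟨k, hk⟩ : ∃ k, (node g i).length = k + 1 := ⟨(node g i).length - 1, by omega⟩
    have htail : (node g i).tail = path (dec g i) k := by
      rw [node_eq, ← node_length, hk]; rfl
    have h1 : L + 1 ≤ cnt g n (node g i).tail := by
      have h2 := cnt_full g i k (by omega)
      have h3 := cnt_mono g hin.le (path (dec g i) k)
      rw [htail]; omega
    refine h1.trans (Finset.card_le_card ?_)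
    intro i' hi'
    simp only [Finset.mem_filter, Finset.mem_range, Finset.mem_bipartiteAbove, sel] at hi' ⊢
    refine ⟨⟨hi'.1, ?_⟩, hi'.2⟩
    have h4 := hi'.2
    have h5 : level g (st g i') = k := by
      rw [← node_length, h4, htail, path_length]
    rw [htail, node_eq, h5] at h4
    rw [path_inj h4 (by omega), hdec]
  · intro i _
    have : Finset.bipartiteBelow (fun σ i => node g i = σ.tail) (highNodes g j L n) i
        ⊆ {true :: node g i, false :: node g i} := by
      intro σ hσ
      simp only [Finset.mem_bipartiteBelow] at hσ
      obtain ⟨i', hi', rfl⟩ := Finset.mem_image.1 hσ.1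
      have hlen := (Finset.mem_filter.1 hi').2
      rw [hσ.2]
      cases h : node g i' with
      | nil => simp [h] at hlen
      | cons b t => cases b <;> simp
    exact (Finset.card_le_card this).trans Finset.card_le_two

lemma abs_sum_sel_le (j L : ℕ) (hL : j < L) : ∃ C : ℕ, ∀ n,
    |∑ i ∈ sel g j n, sgn g i| ≤ C + (highNodes g j L n).card := by
  obtain ⟨C, hC⟩ := exists_low_bound g L
  refine ⟨C, fun n => ?_⟩
  rw [← Finset.sum_filter_add_sum_filter_not (sel g j n) (fun i => (node g i).length ≤ L)]
  refine (abs_add_le _ _).trans (add_le_add ?_ ?_)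
  · refine (Finset.abs_sum_le_sum_abs _ _).trans ?_
    simp only [abs_sgn, Finset.sum_const, nsmul_eq_mul, mul_one]
    refine Nat.cast_le.2 ((Finset.card_le_card ?_).trans (hC n))
    exact Finset.filter_subset_filter _ (Finset.filter_subset _ _)
  · simp only [not_le]
    rw [← Finset.sum_fiberwise_of_maps_to (t := highNodes g j L n) (g := node g)
      (fun i hi => Finset.mem_image_of_mem _ hi)]
    refine (Finset.abs_sum_le_sum_abs _ _).trans ?_
    rw [Finset.card_eq_sum_ones, Nat.cast_sum]
    refine Finset.sum_le_sum fun σ hσ => ?_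
    -- every position assigned to `σ` is selected, so the fibre over `σ` is complete
    have hfib : ((sel g j n).filter (fun i => L < (node g i).length)).filter
        (fun i => node g i = σ) = (Finset.range n).filter (fun i => node g i = σ) := by
      obtain ⟨i, hi, rfl⟩ := Finset.mem_image.1 hσ
      simp only [sel, Finset.mem_filter, Finset.mem_range] at hi
      ext i'
      simp only [sel, Finset.mem_filter, Finset.mem_range]
      constructor
      · rintro ⟨⟨⟨h1, -⟩, -⟩, h2⟩; exact ⟨h1, h2⟩
      · rintro ⟨h1, h2⟩
        have h3 : L < (node g i').length := by rw [h2]; exact hi.2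
        refine ⟨⟨⟨h1, ?_⟩, h3⟩, h2⟩
        rw [dec_eq_of_node g h2 (by omega), hi.1.2]
    rw [hfib, sum_node]
    split_ifs <;> simp

/-- The number of `true`'s at the positions before `n` selected by the `j`-th rule. -/
noncomputable def selTrue (j n : ℕ) : ℕ := ((sel g j n).filter (fun i => seq g i = true)).card

lemma sum_sel_eq (j n : ℕ) :
    ∑ i ∈ sel g j n, sgn g i = 2 * (selTrue g j n : ℤ) - (sel g j n).card := by
  have h : ∀ i, sgn g i = 2 * (if seq g i = true then 1 else 0) - 1 := by
    intro i; unfold sgn; split_ifs <;> norm_num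
  simp only [h, Finset.sum_sub_distrib, ← Finset.mul_sum, selTrue, Finset.sum_boole]
  simp

lemma balance (j : ℕ) (δ : ℝ) (hδ : 0 < δ) : ∃ C : ℝ, ∀ n,
    |2 * (selTrue g j n : ℝ) - (sel g j n).card| ≤ C + δ * (sel g j n).card := by
  obtain ⟨L₀, hL₀⟩ := exists_nat_gt (2 / δ)
  set L := L₀ + j + 1
  obtain ⟨C, hC⟩ := abs_sum_sel_le g j L (by omega)
  refine ⟨C, fun n => ?_⟩
  have h1 := hC n
  rw [sum_sel_eq] at h1
  have h2 : |2 * (selTrue g j n : ℝ) - (sel g j n).card| ≤ C + (highNodes g j L n).card := by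
    exact_mod_cast h1
  have h3 : ((highNodes g j L n).card : ℝ) * (L + 1) ≤ (sel g j n).card * 2 := by
    exact_mod_cast card_highNodes g j L n (by omega)
  have h4 : 2 ≤ δ * (L + 1) := by
    have h5 : (L₀ : ℝ) ≤ L + 1 := by
      have : L₀ ≤ L + 1 := by omega
      exact_mod_cast this
    rw [div_lt_iff₀ hδ] at hL₀
    nlinarith
  have h6 : ((highNodes g j L n).card : ℝ) ≤ δ * (sel g j n).card := by
    have hpos : (0 : ℝ) < L + 1 := by positivity
    refine le_of_mul_le_mul_right ?_ hpos
    have hm : (0 : ℝ) ≤ (sel g j n).card := by positivity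
    nlinarith
  linarith

end

/-! ### Frequencies along selection rules -/

lemma tendsto_half {t : ℕ → ℕ}
    (h : ∀ δ : ℝ, 0 < δ → ∃ C : ℝ, ∀ m : ℕ, |2 * (t m : ℝ) - m| ≤ C + δ * m) :
    Tendsto (fun m : ℕ => (t m : ℝ) / m) atTop (nhds (1 / 2)) := by
  rw [Metric.tendsto_atTop]
  intro ε hε
  obtain ⟨C, hC⟩ := h ε hε
  obtain ⟨M, hM⟩ := exists_nat_gt (C / ε)
  refine ⟨M + 1, fun m hm => ?_⟩
  have hmM : (M : ℝ) + 1 ≤ m := by exact_mod_cast hm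
  have hm0 : (0 : ℝ) < m := by have : (0 : ℝ) ≤ M := by positivity
                               linarith
  have h1 := hC m
  rw [div_lt_iff₀ hε] at hM
  have h2 : (t m : ℝ) / m - 1 / 2 = (2 * t m - m) / (2 * m) := by field_simp
  rw [Real.dist_eq, h2, abs_div, abs_of_pos (by positivity : (0 : ℝ) < 2 * m),
    div_lt_iff₀ (by positivity)]
  nlinarith

/-- The partial recursive selection rules can be enumerated. -/
lemma exists_enum : ∃ F : ℕ → (List Bool →. Bool), ∀ f, Partrec f → ∃ j, F j = f := by
  refine ⟨fun j a => ((Denumerable.ofNat Nat.Partrec.Code j).eval (Encodable.encode a)).bind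
    fun n => (Encodable.decode n : Option Bool), fun f hf => ?_⟩
  obtain ⟨c, hc⟩ := Nat.Partrec.Code.exists_code.1 hf
  refine ⟨Encodable.encode c, ?_⟩
  funext a
  simp [hc, Part.bind_map]

open Classical in
/-- The selected positions before the `m`-th selected one are the first `m` selected positions.
Positions are shifted by one, because `SelectedAt` counts them from `1`. -/
lemma image_nth (f : List Bool →. Bool) (x : ℕ → Bool) (hinf : {n | SelectedAt f x n}.Infinite)
    (m : ℕ) :
    (Finset.range m).image (fun k => Nat.nth (SelectedAt f x) k - 1)
      = (Finset.range (Nat.nth (SelectedAt f x) m - 1)).filter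
          (fun i => f (prefixOf x i) = Part.some true) := by
  have hP : ∀ k, SelectedAt f x (Nat.nth (SelectedAt f x) k) := Nat.nth_mem_of_infinite hinf
  ext i
  simp only [Finset.mem_image, Finset.mem_range, Finset.mem_filter]
  constructor
  · rintro ⟨k, hk, rfl⟩
    have h1 : Nat.nth (SelectedAt f x) k < Nat.nth (SelectedAt f x) m :=
      Nat.nth_strictMono hinf hk
    have h2 := hP k
    exact ⟨by have := h2.1; omega, h2.2⟩
  · rintro ⟨hi, hf⟩
    have hs : SelectedAt f x (i + 1) := ⟨by omega, by simpa using hf⟩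
    refine ⟨Nat.count (SelectedAt f x) (i + 1), ?_, ?_⟩
    · have hmono : StrictMono (Nat.nth (SelectedAt f x)) := Nat.nth_strictMono hinf
      rw [← hmono.lt_iff_lt, Nat.nth_count hs]
      omega
    · rw [Nat.nth_count hs]; simp

lemma injective_nth_sub (f : List Bool →. Bool) (x : ℕ → Bool)
    (hinf : {n | SelectedAt f x n}.Infinite) :
    Function.Injective (fun k => Nat.nth (SelectedAt f x) k - 1) := by
  intro k l h
  have hk : 1 ≤ Nat.nth (SelectedAt f x) k := (Nat.nth_mem_of_infinite hinf k).1
  have hl : 1 ≤ Nat.nth (SelectedAt f x) l := (Nat.nth_mem_of_infinite hinf l).1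
  simp only at h
  have hkl : Nat.nth (SelectedAt f x) k = Nat.nth (SelectedAt f x) l := by omega
  exact Nat.nth_injective hinf hkl

open Classical in
/-- Ville's theorem for partial recursive selection rules. -/
theorem exists_seq : ∃ x : ℕ → Bool, VMCRandom x ∧ ∀ n, signedSum x n ≤ 0 := by
  obtain ⟨F, hF⟩ := exists_enum
  set g : ℕ → List Bool → Bool := fun j l => decide (F j l = Part.some true) with hg
  refine ⟨seq g, ⟨?_, ?_⟩, signedSum_nonpos g⟩
  · -- the rule selecting every position
    obtain ⟨j, hj⟩ := hF (fun _ => Part.some true) (Computable.const true).partrec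
    have hsel : ∀ n, sel g j n = Finset.range n := fun n => by
      simp [sel, dec, hg, hj]
    refine tendsto_half fun δ hδ => ?_
    obtain ⟨C, hC⟩ := balance g j δ hδ
    refine ⟨C, fun n => ?_⟩
    simpa [selTrue, hsel, trueCount] using hC n
  · intro f hf hinf
    obtain ⟨j, rfl⟩ := hF f hf
    refine tendsto_half fun δ hδ => ?_
    obtain ⟨C, hC⟩ := balance g j δ hδ
    refine ⟨C, fun m => ?_⟩
    have hsel : sel g j (Nat.nth (SelectedAt (F j) (seq g)) m - 1)
        = (Finset.range m).image (fun k => Nat.nth (SelectedAt (F j) (seq g)) k - 1) := by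
      rw [image_nth (F j) (seq g) hinf m]
      simp [sel, dec, hg]
    have hinj := injective_nth_sub (F j) (seq g) hinf
    have h := hC (Nat.nth (SelectedAt (F j) (seq g)) m - 1)
    rw [selTrue, hsel, Finset.filter_image, Finset.card_image_of_injective _ hinj,
      Finset.card_image_of_injective _ hinj, Finset.card_range] at h
    exact h

end Ville

/-- **There exist Von Mises–Church random sequences violating the Law of the Iterated
Logarithm:** for some VMC random sequence `x` and some `ε > 0`, the set
`{n : n ≥ 3 ∧ Sₙ(x)/φ(n) ∈ (1 − ε, 1 + ε)}` is finite. -/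
theorem exists_vmc_random_violating_lil :
    ∃ (x : ℕ → Bool) (ε : ℝ), VMCRandom x ∧ 0 < ε ∧
      {n : ℕ | 3 ≤ n ∧ (signedSum x n : ℝ) / phi n ∈ Set.Ioo (1 - ε) (1 + ε)}.Finite := by
  obtain ⟨x, hx, hS⟩ := Ville.exists_seq
  refine ⟨x, 1 / 2, hx, by norm_num, ?_⟩
  convert Set.finite_empty
  refine Set.eq_empty_of_forall_notMem ?_
  rintro n ⟨-, hn, -⟩
  have h1 : (signedSum x n : ℝ) ≤ 0 := by exact_mod_cast hS n
  have h2 : (signedSum x n : ℝ) / phi n ≤ 0 :=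
    div_nonpos_of_nonpos_of_nonneg h1 (Real.sqrt_nonneg _)
  linarith
end
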